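/- arXiv:0706.2731 — 2 statements merged into one kernel-verified Lean document; each statement's English description precedes it below -/
import Mathlib

section
/- Let R be a standard graded polynomial ring over a field, M a finitely generated graded R-module, and f_1, …, f_s homogeneous forms of degrees d_1 ≥ … ≥ d_s ≥ 1. Set M' := M/(f_1,…,f_s)M and δ := dim M. If dim M' = 1, then reg(M') ≤ max{ a_0(M), a_1(M) + d_1, a_2(M) + d_1 + d_2, …, a_δ(M) + d_1 + … + d_δ } ≤ reg(M) + Σ_{i=1}^{δ} (d_i − 1). -/
/-!
Let `K = K(f; M)` be the Koszul complex of the forms `f`, with cycles `Z_p`, boundaries `B_p` and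
homology `H_p`, so that `H_0 = M' = M / f M`. Write `H^i` for local cohomology with respect to the
variables `x`.

Each `H_p` is annihilated by every `f_l`, because multiplication by `f_l` is homotopic to zero on
`K` (`smul_mem_kB`), and by the annihilator of `M`. Hence it is supported on the support of `M'`
(`supportDim_kHom_le`), which has dimension `1`, and `H^q(H_p) = 0` for `q ≥ 2` by Grothendieck
vanishing. The latter is `GV_of_supportDim_lt`: a prime filtration reduces it to the modules `R / P`;
there either all `x_l` act as zero, or some `x_l` is a nonzerodivisor. In the second case `x_l ^ t`
kills the cohomology class of a cocycle for the exponent `t` (again by the Koszul homotopy), while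
the quotient by `x_l ^ t` has smaller dimension, so induction applies.

Fix `i` and `j`. The exact sequences
`0 → B_p → Z_p → H_p → 0` (`V_extension`) and `0 → Z_{p+1} → K_{p+1} → B_p → 0` (`V_map`,
`V_quotient`) give by descending induction on `p` that `H^i(M')_j = 0` as soon as
`H^{p+i}(K_p)_j = 0` for all `p` (`V_kCh_kB`); the homology modules do not interfere because they
only contribute in cohomological degrees at least `2`. Since `K_p` is the direct sum of the shifts
`M(-d_S)` over the sets `S` of `p` indices, where `d_S = ∑_{l ∈ S} d_l`, a nonzero `H^i(M')_j`
yields `p` and `S` with `|S| = p` and `H^{p+i}(M)_{j - d_S} ≠ 0` (`V_kCh`). Grothendieck vanishing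
for `M` gives `p + i ≤ δ`, and `d_S + i ≤ d_1 + ⋯ + d_{p+i}` (`sum_add_le`) gives the first
inequality. The second one follows from it by `d_t - 1 ≥ 0`.

To avoid derived functors, the vanishing of `H^i` is expressed throughout by Koszul cochains on the
powers `x_l ^ t`: every cocycle becomes a coboundary after raising the exponent `t`. The predicate
`GV` is the ungraded version, and `V`, `UV` are versions for subquotients `A / B` of a fixed module
`E`, where `A` and `B` stand for submodules such as `Z_p` and `B_p` of `K`. All cohomological
degrees are treated simultaneously by cochains indexed by all subsets of the variables.
-/

open Finset

section PaperRegularity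

/-! ## Graded rings, graded modules, and a concrete (Koszul/Čech) model of graded local
cohomology, used to express the invariants `a_i(M)` and `reg(M)` of Castelnuovo–Mumford
regularity theory. -/

/-- Degrees, with `−∞` (for vanishing modules) and `+∞`. -/
abbrev Deg : Type := WithBot (WithTop ℤ)

/-- The canonical inclusion of `ℤ` into `Deg`. -/
def Deg.of (j : ℤ) : Deg := ((j : WithTop ℤ) : Deg)

variable {S : Type} [CommRing S]

/-- `𝒜` is a (ℤ-indexed, nonnegatively supported) standard grading on the ring `S`:
`S = ⊕ 𝒜_i`, `1 ∈ 𝒜_0`, `𝒜_i · 𝒜_j ⊆ 𝒜_{i+j}`, `𝒜_i = 0` for `i < 0`, and `S` is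
generated in degree one: `𝒜_{i+1} = 𝒜_1 · 𝒜_i`. -/
structure IsStdGraded (𝒜 : ℤ → AddSubgroup S) : Prop where
  internal : DirectSum.IsInternal 𝒜
  one_mem : (1 : S) ∈ 𝒜 0
  mul_mem : ∀ {i j : ℤ} {a b : S}, a ∈ 𝒜 i → b ∈ 𝒜 j → a * b ∈ 𝒜 (i + j)
  bot_of_neg : ∀ i < (0 : ℤ), 𝒜 i = ⊥
  gen_one : ∀ i : ℤ, 0 ≤ i → ∀ a ∈ 𝒜 (i + 1),
    a ∈ AddSubgroup.closure {y : S | ∃ s ∈ 𝒜 1, ∃ b ∈ 𝒜 i, y = s * b}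

/-- `S` is a standard graded ring *over* `R₀` (via the algebra structure):
the degree-zero part is exactly the image of `R₀`. -/
def GradedOver (𝒜 : ℤ → AddSubgroup S) (R₀ : Type) [CommRing R₀] [Algebra R₀ S] : Prop :=
  Function.Injective (algebraMap R₀ S) ∧ (𝒜 0 : Set S) = Set.range (algebraMap R₀ S)

/-- `ℳ` is a grading on the `S`-module `M`, compatible with the grading `𝒜` of `S`. -/
structure IsGradedMod (𝒜 : ℤ → AddSubgroup S) {M : Type} [AddCommGroup M] [Module S M]
    (ℳ : ℤ → AddSubgroup M) : Prop where
  internal : DirectSum.IsInternal ℳ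
  smul_mem : ∀ {i j : ℤ} {s : S} {m : M}, s ∈ 𝒜 i → m ∈ ℳ j → s • m ∈ ℳ (i + j)

/-- `x : Fin n → S` is a family of degree-one elements generating `𝒜 1` (hence generating
the irrelevant ideal `S₊` up to radical). -/
def GensDegOne (𝒜 : ℤ → AddSubgroup S) {n : ℕ} (x : Fin n → S) : Prop :=
  (∀ i, x i ∈ 𝒜 1) ∧
    ∀ s ∈ 𝒜 1, s ∈ AddSubgroup.closure {y : S | ∃ r ∈ 𝒜 0, ∃ i, y = r * x i}

/-- The irrelevant ideal `S₊ = ⊕_{i>0} 𝒜_i` of a graded ring. -/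
def sPlus (𝒜 : ℤ → AddSubgroup S) : Ideal S :=
  Ideal.span {s : S | ∃ i : ℤ, 0 < i ∧ s ∈ 𝒜 i}

/-- The induced grading on a quotient module `M ⧸ P` (images of the graded pieces). -/
def qmPiece {M : Type} [AddCommGroup M] [Module S M] (P : Submodule S M)
    (ℳ : ℤ → AddSubgroup M) (j : ℤ) : AddSubgroup (M ⧸ P) :=
  AddSubgroup.map (P.mkQ).toAddMonoidHom (ℳ j)

section Koszul

variable {M : Type} [AddCommGroup M] [Module S M] {n : ℕ}

/-- Cochains of the (exponent `t`) Koszul cocomplex on `x_1^t, …, x_n^t` with values in `M`. -/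
abbrev KCochain (M : Type) (n i : ℕ) : Type := {T : Finset (Fin n) // T.card = i} → M

/-- The Koszul codifferential (for the sequence `x_1^t, …, x_n^t`). -/
noncomputable def kd (x : Fin n → S) (t i : ℕ) (z : KCochain M n i) : KCochain M n (i + 1) :=
  fun T => ∑ s ∈ T.1.attach,
    ((-1 : ℤ) ^ ((T.1.filter (fun a => a < s.1)).card)) •
      ((x s.1 ^ t) • z ⟨T.1.erase s.1, by
        rw [Finset.card_erase_of_mem s.2, T.2]; rfl⟩)

/-- The transition map from the exponent `t` Koszul cocomplex to the exponent `t + u` one. -/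
noncomputable def kpush (x : Fin n → S) (u i : ℕ) (z : KCochain M n i) : KCochain M n i :=
  fun T => (∏ s ∈ T.1, x s ^ u) • z T

/-- `z` is a coboundary in the exponent `t` Koszul cocomplex. -/
def kIsCobound (x : Fin n → S) (t : ℕ) : ∀ i, KCochain M n i → Prop
  | 0, z => z = 0
  | i + 1, z => ∃ w : KCochain M n i, kd x t i w = z

/-- `z` lies in the internal degree `j` strand of the exponent `t` Koszul cocomplex
(in cohomological degree `i`), for the grading `ℳ` of `M`. -/
def kStrand (ℳ : ℤ → AddSubgroup M) (t i : ℕ) (j : ℤ) (z : KCochain M n i) : Prop :=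
  ∀ T, z T ∈ ℳ (j + (t * i : ℕ))

/-- Nonvanishing of the degree `j` part of the `i`-th graded local cohomology module
`H^i_{S₊}(M)_j`, computed as the direct limit over `t` of the Koszul cohomologies of
`x_1^t, …, x_n^t`: there is a degree `j` cocycle whose class survives in the colimit. -/
def lcNZ (x : Fin n → S) (ℳ : ℤ → AddSubgroup M) (i : ℕ) (j : ℤ) : Prop :=
  ∃ (t : ℕ) (z : KCochain M n i), kStrand ℳ t i j z ∧ kd x t i z = 0 ∧
    ∀ u : ℕ, ¬ kIsCobound x (t + u) i (kpush x u i z)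

/-- `a_i(M)`: the top degree of the `i`-th local cohomology of `M` (`⊥` if it vanishes). -/
noncomputable def aVal (x : Fin n → S) (ℳ : ℤ → AddSubgroup M) (i : ℕ) : Deg :=
  sSup {d : Deg | ∃ j : ℤ, lcNZ x ℳ i j ∧ d = Deg.of j}

/-- The Castelnuovo–Mumford regularity `reg M = max_i (a_i(M) + i)`. -/
noncomputable def regVal (x : Fin n → S) (ℳ : ℤ → AddSubgroup M) : Deg :=
  sSup {d : Deg | ∃ (i : ℕ) (j : ℤ), lcNZ x ℳ i j ∧ d = Deg.of (j + i)}

end Koszul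

/-- A (bounded-below, homologically indexed) complex of finitely generated graded free
`S`-modules `F_i = ⊕_{a : Fin (r i)} S(-deg i a)`, recorded via its matrices: the entry
`mat i a b ∈ S` is the coefficient of the `b`-th basis vector of `F_i` in the image of the
`a`-th basis vector of `F_{i+1}`; entries are homogeneous of the appropriate degrees. -/
structure GFC (𝒜 : ℤ → AddSubgroup S) where
  r : ℕ → ℕ
  deg : ∀ i, Fin (r i) → ℤ
  mat : ∀ i, Fin (r (i + 1)) → Fin (r i) → S
  mat_mem : ∀ i a b, mat i a b ∈ 𝒜 (deg (i + 1) a - deg i b)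
  comp_eq_zero : ∀ i (a : Fin (r (i + 2))) (c : Fin (r i)),
    ∑ b, mat i b c * mat (i + 1) a b = 0

/-- A minimal graded free resolution of the graded `S`-module `M` (with grading `ℳ`):
a graded free complex `F_•` together with an augmentation `F_0 → M` which is surjective,
exact, and minimal (all entries of the differentials lie in the maximal graded ideal;
`m0` is the set of degree-zero elements lying in the maximal ideal of `S_0`). -/
structure MGFR (𝒜 : ℤ → AddSubgroup S) {M : Type} [AddCommGroup M] [Module S M]
    (ℳ : ℤ → AddSubgroup M) (m0 : Set S) extends GFC 𝒜 where
  augm : Fin (r 0) → M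
  augm_mem : ∀ a, augm a ∈ ℳ (deg 0 a)
  augm_surj : ∀ m : M, ∃ z : Fin (r 0) → S, ∑ a, z a • augm a = m
  exact_zero : ∀ z : Fin (r 0) → S, (∑ a, z a • augm a = 0) ↔
    ∃ w : Fin (r 1) → S, (fun b => ∑ a, mat 0 a b * w a) = z
  exact_succ : ∀ i (z : Fin (r (i + 1)) → S),
    ((fun b => ∑ a, mat i a b * z a) = (0 : Fin (r i) → S)) ↔
      ∃ w : Fin (r (i + 2)) → S, (fun c => ∑ a, mat (i + 1) a c * w a) = z
  minimal : ∀ i a b, deg (i + 1) a = deg i b → mat i a b ∈ m0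

namespace GFC

variable {𝒜 : ℤ → AddSubgroup S} (F : GFC 𝒜)
variable (N : Type) [AddCommGroup N] [Module S N]

/-- The complex `F_• ⊗_S N`, in homological degree `i`. -/
noncomputable def tmap (i : ℕ) : ((Fin (F.r (i + 1)) → N) →ₗ[S] (Fin (F.r i) → N)) where
  toFun z := fun b => ∑ a, F.mat i a b • z a
  map_add' y z := by
    funext b
    simp only [Pi.add_apply, smul_add]
    exact Finset.sum_add_distrib
  map_smul' s z := by
    funext b
    simp only [Pi.smul_apply, RingHom.id_apply]
    rw [Finset.smul_sum]
    exact Finset.sum_congr rfl fun a _ => smul_comm (F.mat i a b) s (z a)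

/-- Cycles of the complex `F_• ⊗_S N`. -/
noncomputable def cyc : ∀ i : ℕ, Submodule S (Fin (F.r i) → N)
  | 0 => ⊤
  | i + 1 => LinearMap.ker (F.tmap N i)

/-- Boundaries of the complex `F_• ⊗_S N`. -/
noncomputable def bdry (i : ℕ) : Submodule S (Fin (F.r i) → N) :=
  LinearMap.range (F.tmap N i)

/-- The homology `H_i(F_• ⊗_S N)` (e.g. `Tor_i^S(M, N)` when `F` is a resolution of `M`). -/
noncomputable def H (i : ℕ) : Type :=
  (F.cyc N i) ⧸ (Submodule.comap (F.cyc N i).subtype (F.bdry N i))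

noncomputable instance (i : ℕ) : AddCommGroup (F.H N i) :=
  inferInstanceAs (AddCommGroup ((F.cyc N i) ⧸ (Submodule.comap (F.cyc N i).subtype (F.bdry N i))))

noncomputable instance (i : ℕ) : Module S (F.H N i) :=
  inferInstanceAs (Module S ((F.cyc N i) ⧸ (Submodule.comap (F.cyc N i).subtype (F.bdry N i))))

/-- The internal degree `j` part of `F_i ⊗_S N`, for a grading `𝒩` of `N`. -/
def fpiece (𝒩 : ℤ → AddSubgroup N) (i : ℕ) (j : ℤ) : AddSubgroup (Fin (F.r i) → N) :=
  AddSubgroup.pi Set.univ (fun a => 𝒩 (j - F.deg i a))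

/-- The induced grading on the homology `H_i(F_• ⊗_S N)`. -/
noncomputable def Hpiece (𝒩 : ℤ → AddSubgroup N) (i : ℕ) (j : ℤ) : AddSubgroup (F.H N i) :=
  AddSubgroup.map
    ((Submodule.mkQ (Submodule.comap (F.cyc N i).subtype (F.bdry N i))).toAddMonoidHom)
    (AddSubgroup.comap ((F.cyc N i).subtype).toAddMonoidHom (F.fpiece N 𝒩 i j))

/-- Nonvanishing of the degree `j` part of `H_i(F_• ⊗_S N)` (e.g. of `Tor_i^S(M, N)_j`). -/
noncomputable def HNZ (𝒩 : ℤ → AddSubgroup N) (i : ℕ) (j : ℤ) : Prop :=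
  F.Hpiece N 𝒩 i j ≠ ⊥

end GFC

/-- The dimension of the support of an `S`-module. -/
noncomputable def mdim (S : Type) [CommRing S] (X : Type) [AddCommGroup X] [Module S X] :
    WithBot (WithTop ℕ) :=
  ringKrullDim (S ⧸ Module.annihilator S X)

end PaperRegularity

/-- The standard grading of the polynomial ring `k[X_1, …, X_N]`, extended by zero to
negative degrees. -/
noncomputable def polyGrading (k : Type) [CommRing k] (N : ℕ) :
    ℤ → AddSubgroup (MvPolynomial (Fin N) k) := fun j =>
  if 0 ≤ j then (MvPolynomial.homogeneousSubmodule (Fin N) k j.toNat).toAddSubgroup else ⊥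

namespace KReg

/-! ### Koszul cochains on all subsets -/

section Cochains

variable {R : Type} [CommRing R] {n : ℕ}

/-- The Koszul sign of `l` relative to `T`. -/
def sg (l : Fin n) (T : Finset (Fin n)) : ℤ := (-1) ^ ((T.filter (fun a => a < l)).card)

lemma sg_mul_self (l : Fin n) (T : Finset (Fin n)) : sg l T * sg l T = 1 := by
  unfold sg
  rw [← mul_pow]
  simp

lemma sg_erase_of_le {a b : Fin n} (T : Finset (Fin n)) (h : b ≤ a) :
    sg b (T.erase a) = sg b T := by
  unfold sg
  congr 2
  ext c
  simp only [mem_filter, mem_erase]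
  constructor
  · tauto
  · rintro ⟨h1, h2⟩
    exact ⟨⟨(h2.trans_le h).ne, h1⟩, h2⟩

lemma sg_erase_of_lt {a b : Fin n} {T : Finset (Fin n)} (ha : a ∈ T) (h : a < b) :
    sg b T = - sg b (T.erase a) := by
  unfold sg
  have h1 : (T.erase a).filter (fun c => c < b) = (T.filter (fun c => c < b)).erase a := by
    ext c
    simp only [mem_filter, mem_erase]
    tauto
  have h2 : a ∈ T.filter (fun c => c < b) := by simp [ha, h]
  rw [h1, ← Finset.card_erase_add_one h2, pow_succ]
  ring

/-- The anticommutation of signs behind both `d ∘ d = 0` and the contracting homotopy. -/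
lemma sg_swap {a b : Fin n} {T : Finset (Fin n)} (ha : a ∈ T) (hb : b ∈ T) (hab : a ≠ b) :
    sg a T * sg b (T.erase a) = - (sg b T * sg a (T.erase b)) := by
  rcases lt_or_gt_of_ne hab with h | h
  · rw [sg_erase_of_le T h.le, sg_erase_of_lt ha h]
    ring
  · rw [sg_erase_of_le T h.le, sg_erase_of_lt hb h]
    ring

variable (M : Type) [AddCommGroup M] [Module R M]

/-- The Koszul codifferential on the sequence `y`, on cochains of all degrees at once: a cochain
is a function on all subsets of `Fin n`. -/
noncomputable def kD (y : Fin n → R) : (Finset (Fin n) → M) →ₗ[R] (Finset (Fin n) → M) where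
  toFun z T := ∑ l ∈ T, sg l T • (y l • z (T.erase l))
  map_add' a b := by
    funext T
    simp only [Pi.add_apply, smul_add, sum_add_distrib]
  map_smul' r a := by
    funext T
    simp only [Pi.smul_apply, RingHom.id_apply, smul_sum]
    refine sum_congr rfl fun l _ => ?_
    rw [smul_comm (y l) r, smul_comm r (sg l T)]

/-- Multiplication of the component at `T` by `∏ l ∈ T, y l`. -/
noncomputable def kP (y : Fin n → R) : (Finset (Fin n) → M) →ₗ[R] (Finset (Fin n) → M) where
  toFun z T := (∏ l ∈ T, y l) • z T
  map_add' a b := by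
    funext T
    simp only [Pi.add_apply, smul_add]
  map_smul' r a := by
    funext T
    simp only [Pi.smul_apply, RingHom.id_apply]
    rw [smul_comm]

/-- Contraction with the `l`-th basis vector. -/
def kH (l : Fin n) (z : Finset (Fin n) → M) : Finset (Fin n) → M :=
  fun T => if l ∈ T then 0 else sg l T • z (insert l T)

variable {M}

lemma kD_apply (y : Fin n → R) (z : Finset (Fin n) → M) (T : Finset (Fin n)) :
    kD M y z T = ∑ l ∈ T, sg l T • (y l • z (T.erase l)) := rfl

lemma kP_apply (y : Fin n → R) (z : Finset (Fin n) → M) (T : Finset (Fin n)) :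
    kP M y z T = (∏ l ∈ T, y l) • z T := rfl

lemma kD_kD (y : Fin n → R) (z : Finset (Fin n) → M) : kD M y (kD M y z) = 0 := by
  funext T
  have h1 : kD M y (kD M y z) T = ∑ p ∈ T.sigma (fun a => T.erase a),
      (sg p.1 T * sg p.2 (T.erase p.1)) •
        ((y p.1 * y p.2) • z ((T.erase p.1).erase p.2)) := by
    rw [kD_apply, Finset.sum_sigma]
    refine sum_congr rfl fun a _ => ?_
    rw [kD_apply, smul_sum, smul_sum]
    refine sum_congr rfl fun b _ => ?_
    rw [smul_comm (y a) (sg b _), smul_smul, smul_smul]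
  rw [h1]
  refine Finset.sum_involution (fun p _ => ⟨p.2, p.1⟩) ?_ ?_ ?_ ?_
  · rintro ⟨a, b⟩ h
    simp only [mem_sigma, mem_erase] at h
    simp only
    rw [sg_swap h.1 h.2.2 (Ne.symm h.2.1), mul_comm (y b), Finset.erase_right_comm (a := b)]
    simp
  · rintro ⟨a, b⟩ h _ h2
    simp only [mem_sigma, mem_erase] at h
    simp only [Sigma.mk.injEq] at h2
    exact h.2.1 h2.1
  · rintro ⟨a, b⟩ h
    simp only [mem_sigma, mem_erase] at h ⊢
    exact ⟨h.2.2, Ne.symm h.2.1, h.1⟩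
  · rintro ⟨a, b⟩ h
    rfl

/-- `y l` acts on the Koszul complex of `y` as a map homotopic to zero. -/
lemma kD_kH_add (y : Fin n → R) (l : Fin n) (z : Finset (Fin n) → M) :
    kD M y (kH M l z) + kH M l (kD M y z) = y l • z := by
  funext T
  rw [Pi.add_apply, Pi.smul_apply]
  by_cases hl : l ∈ T
  · have h1 : kH M l (kD M y z) T = 0 := by simp [kH, hl]
    rw [h1, add_zero, kD_apply, Finset.sum_eq_single l]
    · simp only [kH, mem_erase, ne_eq, not_true_eq_false, false_and, if_false,
        Finset.insert_erase hl]
      rw [sg_erase_of_le T le_rfl, smul_comm (y l), smul_smul, sg_mul_self, one_smul]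
    · intro b _ hb
      simp [kH, hl, Ne.symm hb]
    · exact fun h => absurd hl h
  · have h1 : kH M l (kD M y z) T = sg l T • kD M y z (insert l T) := by simp [kH, hl]
    rw [h1, kD_apply, kD_apply, Finset.sum_insert hl, smul_add, Finset.erase_insert hl, smul_smul]
    have h0 : sg l (insert l T) = sg l T := by
      conv_rhs => rw [← Finset.erase_insert hl]
      rw [sg_erase_of_le _ le_rfl]
    rw [h0, sg_mul_self, one_smul, add_left_comm, smul_sum, ← sum_add_distrib]
    convert add_zero _
    refine sum_eq_zero fun b hb => ?_
    have hbl : b ≠ l := fun h => hl (h ▸ hb)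
    have h2 : l ∉ T.erase b := fun h => hl (mem_of_mem_erase h)
    have h3 : kH M l z (T.erase b) = sg l (T.erase b) • z (insert l (T.erase b)) := by
      simp only [kH, h2, if_false]
    rw [h3, Finset.erase_insert_of_ne (Ne.symm hbl), smul_comm (y b), smul_smul, smul_smul,
      ← add_smul]
    have h4 := sg_swap (T := insert l T) (mem_insert_self l T) (mem_insert_of_mem hb)
      (Ne.symm hbl)
    rw [h0, Finset.erase_insert hl, Finset.erase_insert_of_ne (Ne.symm hbl)] at h4
    have h5 : sg l (insert l (T.erase b)) = sg l (T.erase b) := by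
      conv_rhs => rw [← Finset.erase_insert h2]
      rw [sg_erase_of_le _ le_rfl]
    rw [h5] at h4
    have h6 : sg b T * sg l (T.erase b) + sg l T * sg b (insert l T) = 0 := by
      rcases lt_or_gt_of_ne hbl with h | h
      · have e1 := sg_erase_of_lt hb h
        have e2 := sg_erase_of_le (a := l) (b := b) (insert l T) h.le
        rw [Finset.erase_insert hl] at e2
        rw [e1, e2]
        ring
      · have e1 := sg_erase_of_lt (mem_insert_self l T) h
        have e2 := sg_erase_of_le (a := b) (b := l) T h.le
        rw [Finset.erase_insert hl] at e1
        rw [e1, e2]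
        ring
    rw [h6, zero_smul]

lemma kD_kP (y y' : Fin n → R) (z : Finset (Fin n) → M) :
    kD M (y * y') (kP M y' z) = kP M y' (kD M y z) := by
  funext T
  rw [kD_apply, kP_apply, kD_apply, smul_sum]
  refine sum_congr rfl fun l hl => ?_
  rw [kP_apply, smul_comm _ (sg l T), smul_smul, smul_smul, ← Finset.mul_prod_erase T y' hl,
    Pi.mul_apply]
  congr 2
  ring

lemma kP_kP (y y' : Fin n → R) (z : Finset (Fin n) → M) :
    kP M y' (kP M y z) = kP M (y * y') z := by
  funext T
  rw [kP_apply, kP_apply, kP_apply, smul_smul]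
  simp only [Pi.mul_apply, prod_mul_distrib]
  rw [mul_comm]

variable {M' : Type} [AddCommGroup M'] [Module R M']

lemma kD_map (φ : M →ₗ[R] M') (y : Fin n → R) (z : Finset (Fin n) → M) :
    kD M' y (fun T => φ (z T)) = fun T => φ (kD M y z T) := by
  funext T
  simp only [kD_apply, map_sum, map_zsmul, map_smul]

lemma kP_map (φ : M →ₗ[R] M') (y : Fin n → R) (z : Finset (Fin n) → M) :
    kP M' y (fun T => φ (z T)) = fun T => φ (kP M y z T) := by
  funext T
  simp only [kP_apply, map_smul]

end Cochains

/-! ### Truncation of cochains -/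

section Cut

variable {R : Type} [CommRing R] {n : ℕ} {M : Type} [AddCommGroup M] [Module R M]

/-- The part of a cochain in cohomological degree `i`, with `p` applied to the values. The index
`i` is an integer so that `i - 1` makes sense for `i = 0`. -/
def kCut (i : ℤ) (p : M →+ M) (z : Finset (Fin n) → M) : Finset (Fin n) → M :=
  fun T => if (T.card : ℤ) = i then p (z T) else 0

lemma kD_kCut (y : Fin n → R) (i : ℤ) (p p' : M →+ M)
    (h : ∀ l m, p' (y l • m) = y l • p m) (z : Finset (Fin n) → M) :
    kD M y (kCut (i - 1) p z) = kCut i p' (kD M y z) := by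
  funext T
  rw [kD_apply, kCut, kD_apply]
  have hc : ∀ l ∈ T, ((T.erase l).card : ℤ) = T.card - 1 := fun l hl => by
    have := Finset.card_erase_add_one hl
    lia
  split_ifs with hT
  · rw [map_sum]
    refine sum_congr rfl fun l hl => ?_
    rw [map_zsmul, h, kCut, if_pos (by rw [hc l hl, hT])]
  · refine sum_eq_zero fun l hl => ?_
    rw [kCut, if_neg (by rw [hc l hl]; lia), smul_zero, smul_zero]

lemma kP_kCut (y : Fin n → R) (i : ℤ) (p p' : M →+ M)
    (h : ∀ T : Finset (Fin n), (T.card : ℤ) = i → ∀ m,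
      p' ((∏ l ∈ T, y l) • m) = (∏ l ∈ T, y l) • p m) (z : Finset (Fin n) → M) :
    kP M y (kCut i p z) = kCut i p' (kP M y z) := by
  funext T
  rw [kP_apply, kCut, kCut]
  split_ifs with hT
  · rw [kP_apply, h T hT]
  · rw [smul_zero]

lemma kCut_id {i : ℤ} {z : Finset (Fin n) → M} (h : ∀ T, (T.card : ℤ) ≠ i → z T = 0) :
    kCut i (AddMonoidHom.id M) z = z := by
  funext T
  rw [kCut]
  split_ifs with hT
  · rfl
  · exact (h T hT).symm

end Cut

/-! ### Vanishing above the dimension -/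

section Grothendieck

variable {R : Type} [CommRing R] {n : ℕ}

/-- The `i`-th local cohomology of `Q` with respect to `x`, defined as the colimit of the Koszul
cohomologies of the powers of `x`, vanishes. -/
def GV (x : Fin n → R) (Q : Type) [AddCommGroup Q] [Module R Q] (i : ℤ) : Prop :=
  ∀ (t : ℕ) (z : Finset (Fin n) → Q), (∀ T, (T.card : ℤ) ≠ i → z T = 0) →
    kD Q (x ^ t) z = 0 → ∃ (u : ℕ) (w : Finset (Fin n) → Q),
      kD Q (x ^ (t + u)) w = kP Q (x ^ u) z

variable {x : Fin n → R} {Q : Type} [AddCommGroup Q] [Module R Q]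

lemma kP_supp {y : Fin n → R} {i : ℤ} {z : Finset (Fin n) → Q}
    (h : ∀ T, (T.card : ℤ) ≠ i → z T = 0) : ∀ T, (T.card : ℤ) ≠ i → kP Q y z T = 0 :=
  fun T hT => by rw [kP_apply, h T hT, smul_zero]

lemma kD_supp {y : Fin n → R} {i : ℤ} {z : Finset (Fin n) → Q}
    (h : ∀ T, (T.card : ℤ) ≠ i - 1 → z T = 0) : ∀ T, (T.card : ℤ) ≠ i → kD Q y z T = 0 := by
  intro T hT
  rw [← kCut_id h, kD_kCut y i _ (AddMonoidHom.id Q) (fun l m => rfl), kCut, if_neg hT]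

lemma GV_of_exact {A B C : Type} [AddCommGroup A] [Module R A] [AddCommGroup B] [Module R B]
    [AddCommGroup C] [Module R C] (f : A →ₗ[R] B) (g : B →ₗ[R] C) (hf : Function.Injective f)
    (hg : Function.Surjective g) (hfg : Function.Exact f g) {i : ℤ} (hA : GV x A i)
    (hC : GV x C i) : GV x B i := by
  intro t z hz hdz
  obtain ⟨u, w, hw⟩ := hC t (fun T => g (z T)) (fun T hT => by rw [hz T hT, map_zero])
    (by rw [kD_map, hdz]; funext T; simp)
  choose v hv using fun T => hg (kCut (i - 1) (AddMonoidHom.id C) w T)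
  have hv' : (fun T => g (kCut (i - 1) (AddMonoidHom.id B) v T)) =
      kCut (i - 1) (AddMonoidHom.id C) w := by
    funext T
    by_cases hT : (T.card : ℤ) = i - 1
    · simp only [kCut, hT, if_true] at hv ⊢
      have := hv T
      simpa [hT] using this
    · simp [kCut, hT]
  set v' := kCut (i - 1) (AddMonoidHom.id B) v with hvdef
  have hgz : ∀ T, g (kP B (x ^ u) z T - kD B (x ^ (t + u)) v' T) = 0 := by
    intro T
    rw [map_sub]
    have h1 := congrFun (kD_map g (x ^ (t + u)) v') T
    have h2 := congrFun (kP_map g (x ^ u) z) T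
    rw [← h1, ← h2, hv', kD_kCut _ i _ (AddMonoidHom.id C) (fun l m => rfl), hw, kCut_id, sub_self]
    exact kP_supp fun T hT => by rw [hz T hT, map_zero]
  choose a ha using fun T => (hfg _).1 (hgz T)
  have hva : ∀ T, (T.card : ℤ) ≠ i - 1 → v' T = 0 := fun T hT => by simp [hvdef, kCut, hT]
  obtain ⟨u', b, hb⟩ := hA (t + u) a
    (fun T hT => hf (by rw [ha, map_zero, kP_supp hz T hT, kD_supp hva T hT, sub_zero]))
    (by
      funext T
      refine hf ?_
      have h1 := congrFun (kD_map f (x ^ (t + u)) a) T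
      have h2 : (fun T => f (a T)) = kP B (x ^ u) z - kD B (x ^ (t + u)) v' := funext ha
      rw [← h1, h2, map_sub, kD_kD, sub_zero, pow_add, kD_kP, hdz, map_zero]
      simp)
  refine ⟨u + u', (fun T => f (b T)) + kP B (x ^ u') v', ?_⟩
  have h2 : (fun T => f (a T)) = kP B (x ^ u) z - kD B (x ^ (t + u)) v' := funext ha
  rw [map_add, ← add_assoc, kD_map, hb, ← kP_map, h2, pow_add x (t + u) u', kD_kP, map_sub,
    kP_kP, ← pow_add, sub_add_cancel]

lemma GV_of_subsingleton [Subsingleton Q] (i : ℤ) : GV x Q i :=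
  fun _ _ _ _ => ⟨0, 0, Subsingleton.elim _ _⟩

/-- If `x l ^ t` is a nonzerodivisor on `Q`, a cocycle `z` has `x l ^ t • z = d w`, and vanishing
for `Q / x l ^ t` in one degree less allows to divide `w` by `x l ^ t`. -/
lemma GV_of_quotSMulTop (l : Fin n) (hreg : ∀ (t : ℕ) (m : Q), x l ^ t • m = 0 → m = 0) {i : ℤ}
    (h : ∀ t : ℕ, GV x (QuotSMulTop (x l ^ t) Q) (i - 1)) : GV x Q i := by
  intro t z hz hdz
  have h0 : kD Q (x ^ t) (kH Q l z) = x l ^ t • z := by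
    have := kD_kH_add (x ^ t) l z
    rw [hdz] at this
    have e : kH Q l (0 : Finset (Fin n) → Q) = 0 := by funext T; simp [kH]
    rwa [e, add_zero] at this
  let q : Q →ₗ[R] QuotSMulTop (x l ^ t) Q := Submodule.mkQ _
  have hq : ∀ m, q (x l ^ t • m) = 0 := fun m =>
    (Submodule.Quotient.mk_eq_zero _).2 (Submodule.smul_mem_pointwise_smul _ _ _ trivial)
  obtain ⟨u, w, hw⟩ := h t t (fun T => q (kH Q l z T))
    (fun T hT => by
      rw [kH]
      split_ifs with hl
      · rw [map_zero]
      · rw [hz, smul_zero, map_zero]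
        rw [card_insert_of_notMem hl]
        push_cast
        lia)
    (by rw [kD_map, h0]; funext T; exact hq _)
  choose v hv using fun T => Submodule.mkQ_surjective _ (w T)
  have hv' : w = fun T => q (v T) := funext fun T => (hv T).symm
  have hmem : ∀ T, ∃ m, x l ^ t • m =
      kP Q (x ^ u) (kH Q l z) T - kD Q (x ^ (t + u)) v T := by
    intro T
    have h1 := congrFun hw T
    rw [hv', kD_map, kP_map] at h1
    have h2 := (Submodule.Quotient.eq _).1 h1.symm
    obtain ⟨m, -, hm⟩ := (Submodule.mem_smul_pointwise_iff_exists _ _ _).1 h2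
    exact ⟨m, hm⟩
  choose b hb using hmem
  refine ⟨u, b, ?_⟩
  have h3 : x l ^ t • kP Q (x ^ u) z = x l ^ t • kD Q (x ^ (t + u)) b := by
    have h4 : x l ^ t • b = kP Q (x ^ u) (kH Q l z) - kD Q (x ^ (t + u)) v := funext hb
    rw [← map_smul, ← map_smul, h4, map_sub, kD_kD, sub_zero, ← h0, pow_add, kD_kP]
  funext T
  have h5 := congrFun h3 T
  rw [Pi.smul_apply, Pi.smul_apply] at h5
  exact (sub_eq_zero.1 (hreg t _ (by rw [smul_sub, h5, sub_self]))).symm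

/-- Local cohomology of a finitely generated module vanishes above the dimension. -/
theorem GV_of_supportDim_lt [IsNoetherianRing R] (m : ℕ) :
    ∀ (Q : Type) [AddCommGroup Q] [Module R Q] [Module.Finite R Q],
      Module.supportDim R Q < (m : WithBot ℕ∞) → ∀ i : ℤ, (m : ℤ) ≤ i → GV x Q i := by
  induction m with
  | zero =>
    intro Q _ _ _ hQ i _
    have : Subsingleton Q := by
      rw [← Module.supportDim_eq_bot_iff_subsingleton R]
      by_contra hb
      have hnt := (Module.supportDim_ne_bot_iff_nontrivial R Q).1 hb
      have : (0 : WithBot ℕ∞) ≤ Module.supportDim R Q := by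
        have := (Module.nonempty_support_iff (R := R)).2 hnt
        have : Nonempty (Module.support R Q) := this.to_subtype
        exact Order.krullDim_nonneg
      exact absurd hQ (not_lt.2 (by simpa using this))
    exact GV_of_subsingleton i
  | succ m ih =>
    intro Q _ _ hfin
    induction hfin using IsNoetherianRing.induction_on_isQuotientEquivQuotientPrime R with
    | subsingleton N => exact fun _ i _ => GV_of_subsingleton i
    | quotient N p e =>
      intro hN i hi
      by_cases hx : ∀ l, x l ∈ p.1
      · intro t z hz _
        refine ⟨1, 0, ?_⟩
        rw [map_zero]
        funext T
        rw [kP_apply]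
        by_cases hT : (T.card : ℤ) = i
        · obtain ⟨l, hl⟩ : T.Nonempty := by
            rw [← Finset.card_pos]
            lia
          refine (e.injective ?_).symm
          rw [map_smul, Pi.zero_apply, map_zero]
          obtain ⟨r, hr⟩ := Ideal.Quotient.mk_surjective (e (z T))
          rw [← hr, Algebra.smul_def, Ideal.Quotient.algebraMap_eq, ← map_mul,
            Ideal.Quotient.eq_zero_iff_mem]
          refine Ideal.mul_mem_right _ _ (Ideal.mem_of_dvd _ (Finset.dvd_prod_of_mem _ hl) ?_)
          simpa using hx l
        · rw [hz T hT, smul_zero, Pi.zero_apply]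
      · push Not at hx
        obtain ⟨l, hl⟩ := hx
        have hpow : ∀ t : ℕ, x l ^ t ∉ p.1 := fun t ht => hl (p.2.mem_of_pow_mem t ht)
        refine GV_of_quotSMulTop l (fun t y hy => ?_) fun t => ?_
        · apply e.injective
          have h1 : x l ^ t • e y = 0 := by rw [← map_smul, hy, map_zero]
          obtain ⟨r, hr⟩ := Ideal.Quotient.mk_surjective (e y)
          rw [← hr, Algebra.smul_def, Ideal.Quotient.algebraMap_eq, ← map_mul,
            Ideal.Quotient.eq_zero_iff_mem] at h1
          rw [← hr, map_zero, Ideal.Quotient.eq_zero_iff_mem]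
          exact (p.2.mem_or_mem h1).resolve_left (hpow t)
        · refine ih _ ?_ (i - 1) (by push_cast at hi; lia)
          have hann : Module.annihilator R N = p.1 := by
            rw [e.annihilator_eq, Ideal.annihilator_quotient]
          have h1 := Module.supportDim_quotSMulTop_succ_le_of_notMem_minimalPrimes (M := N)
            (x := x l ^ t) (by
              intro q hq
              rw [hann] at hq
              have := p.2
              rw [Ideal.minimalPrimes_eq_subsingleton_self] at hq
              rw [hq]
              exact hpow t)
          have h2 := h1.trans_lt hN
          push_cast at h2
          exact lt_of_add_lt_add_right h2
    | exact N₁ N₂ N₃ f g hf hg hfg h₁ h₃ =>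
      intro hN i hi
      exact GV_of_exact f g hf hg hfg
        (h₁ ((Module.supportDim_le_of_injective f hf).trans_lt hN) i hi)
        (h₃ ((Module.supportDim_le_of_surjective g hg).trans_lt hN) i hi)

end Grothendieck

/-! ### Graded vanishing for subquotients -/

section Graded

variable {R : Type} [CommRing R] {n : ℕ} {𝒜 : ℤ → AddSubgroup R}

/-- A grading of the module `E`, encoded by its projections onto the homogeneous components. -/
structure GrProj (𝒜 : ℤ → AddSubgroup R) (E : Type) [AddCommGroup E] [Module R E] where
  pr : ℤ → E →+ E
  idem : ∀ j m, pr j (pr j m) = pr j m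
  smul : ∀ {e : ℤ} {g : R}, g ∈ 𝒜 e → ∀ j m, pr (j + e) (g • m) = g • pr j m

variable {E : Type} [AddCommGroup E] [Module R E] (π : GrProj 𝒜 E) {x : Fin n → R}

lemma GrProj.pow_smul {g : R} (hg : g ∈ 𝒜 1) (t : ℕ) (j : ℤ) (m : E) :
    π.pr (j + t) (g ^ t • m) = g ^ t • π.pr j m := by
  induction t with
  | zero => simp
  | succ t ih =>
    rw [pow_succ', mul_smul, mul_smul, ← ih, ← π.smul hg]
    push_cast
    rw [add_assoc]

lemma GrProj.prod_smul (hx : ∀ l, x l ∈ 𝒜 1) (u : ℕ) (T : Finset (Fin n)) (j : ℤ) (m : E) :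
    π.pr (j + u * T.card) ((∏ l ∈ T, (x ^ u) l) • m) = (∏ l ∈ T, (x ^ u) l) • π.pr j m := by
  induction T using Finset.induction_on with
  | empty => simp
  | insert a T ha ih =>
    rw [prod_insert ha, mul_smul, mul_smul, ← ih, Pi.pow_apply, ← π.pow_smul (hx a),
      card_insert_of_notMem ha]
    push_cast
    congr 2
    ring

/-- The projection of a cochain (for the exponent `t`) to cohomological degree `i` and internal
degree `j`. -/
def GrProj.P (t : ℕ) (i j : ℤ) (z : Finset (Fin n) → E) : Finset (Fin n) → E :=
  kCut i (π.pr (j + t * i)) z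

lemma GrProj.kD_P (hx : ∀ l, x l ∈ 𝒜 1) (t : ℕ) (i j : ℤ) (z : Finset (Fin n) → E) :
    kD E (x ^ t) (π.P t (i - 1) j z) = π.P t i j (kD E (x ^ t) z) := by
  refine kD_kCut _ _ _ _ (fun l m => ?_) z
  rw [Pi.pow_apply, ← π.pow_smul (hx l)]
  congr 2
  ring

lemma GrProj.kP_P (hx : ∀ l, x l ∈ 𝒜 1) (t u : ℕ) (i j : ℤ) (z : Finset (Fin n) → E) :
    kP E (x ^ u) (π.P t i j z) = π.P (t + u) i j (kP E (x ^ u) z) := by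
  refine kP_kCut _ _ _ _ (fun T hT m => ?_) z
  rw [← π.prod_smul hx u T, hT]
  congr 2
  push_cast
  ring

lemma GrProj.P_sub (t : ℕ) (i j : ℤ) (z w : Finset (Fin n) → E) :
    π.P t i j (z - w) = π.P t i j z - π.P t i j w := by
  funext T
  simp only [P, kCut, Pi.sub_apply]
  split_ifs <;> simp

lemma GrProj.P_P (t : ℕ) (i j : ℤ) (z : Finset (Fin n) → E) :
    π.P t i j (π.P t i j z) = π.P t i j z := by
  funext T
  simp only [P, kCut]
  split_ifs
  · exact π.idem _ _
  · rfl

/-- The submodule `A` is stable under the projections, i.e. it is a graded submodule. -/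
def GrProj.Stable (A : Submodule R E) : Prop := ∀ j, ∀ m ∈ A, π.pr j m ∈ A

variable {π} in
lemma GrProj.Stable.P_mem {A : Submodule R E} (hA : π.Stable A) {t : ℕ} {i j : ℤ}
    {z : Finset (Fin n) → E} (hz : ∀ T, z T ∈ A) (T : Finset (Fin n)) : π.P t i j z T ∈ A := by
  simp only [P, kCut]
  split_ifs
  · exact hA _ _ (hz T)
  · exact A.zero_mem

lemma kD_mem {A : Submodule R E} {y : Fin n → R} {z : Finset (Fin n) → E} (hz : ∀ T, z T ∈ A)
    (T : Finset (Fin n)) : kD E y z T ∈ A :=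
  A.sum_mem fun _ _ => zsmul_mem (A.smul_mem _ (hz _)) _

lemma kP_mem {A : Submodule R E} {y : Fin n → R} {z : Finset (Fin n) → E} (hz : ∀ T, z T ∈ A)
    (T : Finset (Fin n)) : kP E y z T ∈ A :=
  A.smul_mem _ (hz _)

/-- The degree `j` part of the `i`-th local cohomology of the subquotient `A / B` of the graded
module `E` vanishes. -/
def V (x : Fin n → R) (π : GrProj 𝒜 E) (A B : Submodule R E) (i j : ℤ) : Prop :=
  ∀ (t : ℕ) (z : Finset (Fin n) → E), (∀ T, z T ∈ A) → π.P t i j z = z →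
    (∀ T, kD E (x ^ t) z T ∈ B) → ∃ (u : ℕ) (w : Finset (Fin n) → E), (∀ T, w T ∈ A) ∧
      ∀ T, (kP E (x ^ u) z - kD E (x ^ (t + u)) w) T ∈ B

/-- The `i`-th local cohomology of the subquotient `A / B` vanishes (in all degrees). -/
def UV (x : Fin n → R) (A B : Submodule R E) (i : ℤ) : Prop :=
  ∀ (t : ℕ) (z : Finset (Fin n) → E), (∀ T, z T ∈ A) → (∀ T, (T.card : ℤ) ≠ i → z T = 0) →
    (∀ T, kD E (x ^ t) z T ∈ B) → ∃ (u : ℕ) (w : Finset (Fin n) → E), (∀ T, w T ∈ A) ∧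
      ∀ T, (kP E (x ^ u) z - kD E (x ^ (t + u)) w) T ∈ B

variable {π}

lemma V_bot_iff {A : Submodule R E} {i j : ℤ} : V x π A ⊥ i j ↔
    ∀ (t : ℕ) (z : Finset (Fin n) → E), (∀ T, z T ∈ A) → π.P t i j z = z →
      kD E (x ^ t) z = 0 → ∃ (u : ℕ) (w : Finset (Fin n) → E), (∀ T, w T ∈ A) ∧
        kD E (x ^ (t + u)) w = kP E (x ^ u) z := by
  unfold V
  simp only [Submodule.mem_bot]
  have h : ∀ a : Finset (Fin n) → E, (∀ T, a T = 0) ↔ a = 0 := fun a =>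
    ⟨fun h => funext h, fun h T => congrFun h T⟩
  simp only [h, sub_eq_zero]
  simp only [eq_comm]

/-- From `0 → A → C → C / A → 0`: if `H^i(C)_j` and `H^{i+1}(A)_j` vanish, so does
`H^i(C / A)_j`. -/
lemma V_quotient (hx : ∀ l, x l ∈ 𝒜 1) {A C : Submodule R E} (hAC : A ≤ C) (hA : π.Stable A)
    {i j : ℤ} (h1 : V x π C ⊥ i j) (h2 : V x π A ⊥ (i + 1) j) : V x π C A i j := by
  rw [V_bot_iff] at h1 h2
  intro t z hz hPz hdz
  have hPa : π.P t (i + 1) j (kD E (x ^ t) z) = kD E (x ^ t) z := by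
    rw [← π.kD_P hx, add_sub_cancel_right, hPz]
  obtain ⟨u, w, hw, hwd⟩ := h2 t _ hdz hPa (kD_kD _ _)
  have hw' : kD E (x ^ (t + u)) (π.P (t + u) i j w) = kP E (x ^ u) (kD E (x ^ t) z) := by
    have := π.kD_P hx (t + u) (i + 1) j w
    rw [add_sub_cancel_right] at this
    rw [this, hwd, ← π.kP_P hx, hPa]
  obtain ⟨v, y, hy, hyd⟩ := h1 (t + u) (kP E (x ^ u) z - π.P (t + u) i j w)
    (fun T => C.sub_mem (kP_mem hz T) (hAC (hA.P_mem hw T)))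
    (by rw [π.P_sub, π.P_P, ← π.kP_P hx, hPz])
    (by rw [map_sub, hw', pow_add, kD_kP, sub_self])
  refine ⟨u + v, y, hy, fun T => ?_⟩
  rw [← add_assoc, hyd, pow_add x u v, ← kP_kP, map_sub, sub_sub_cancel]
  exact kP_mem (hA.P_mem hw) T

/-- The isomorphism `C / (C ∩ ker φ) ≃ φ(C)` on local cohomology. -/
lemma V_map {C : Submodule R E} (hC : π.Stable C) (φ : E →ₗ[R] E)
    (hφ : ∀ j m, φ (π.pr j m) = π.pr j (φ m)) {i j : ℤ}
    (h : V x π C (C ⊓ LinearMap.ker φ) i j) : V x π (C.map φ) ⊥ i j := by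
  rw [V_bot_iff]
  intro t z hz hPz hdz
  choose y hyC hy using fun T => Submodule.mem_map.1 (hz T)
  have hy' : (fun T => φ (π.P t i j y T)) = z := by
    rw [← hPz]
    funext T
    simp only [GrProj.P, kCut]
    split_ifs
    · rw [hφ, hy]
    · rw [map_zero]
  obtain ⟨u, w, hw, hwd⟩ := h t (π.P t i j y) (hC.P_mem hyC) (π.P_P t i j y)
    (fun T => Submodule.mem_inf.2 ⟨kD_mem (hC.P_mem hyC) T, by
      have := congrFun (kD_map φ (x ^ t) (π.P t i j y)) T
      rw [LinearMap.mem_ker, ← this, hy', hdz]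
      rfl⟩)
  refine ⟨u, fun T => φ (w T), fun T => Submodule.mem_map_of_mem (hw T), ?_⟩
  rw [← hy', kD_map, kP_map]
  funext T
  have := LinearMap.mem_ker.1 (Submodule.mem_inf.1 (hwd T)).2
  rw [Pi.sub_apply, map_sub, sub_eq_zero] at this
  exact this.symm

/-- From `0 → B → A → A / B → 0`: if `H^i(B)_j` and `H^i(A / B)` vanish, so does `H^i(A)_j`. -/
lemma V_extension (hx : ∀ l, x l ∈ 𝒜 1) {A B : Submodule R E} (hBA : B ≤ A) (hA : π.Stable A)
    (hB : π.Stable B) {i j : ℤ} (h1 : V x π B ⊥ i j) (h2 : UV x A B i) : V x π A ⊥ i j := by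
  rw [V_bot_iff] at h1 ⊢
  intro t z hz hPz hdz
  obtain ⟨u, w, hw, hwB⟩ := h2 t z hz
    (fun T hT => by rw [← hPz]; simp [GrProj.P, kCut, hT])
    (fun T => by rw [hdz]; exact B.zero_mem)
  have hc : kP E (x ^ u) z - kD E (x ^ (t + u)) (π.P (t + u) (i - 1) j w) =
      π.P (t + u) i j (kP E (x ^ u) z - kD E (x ^ (t + u)) w) := by
    rw [π.P_sub, ← π.kP_P hx, hPz, π.kD_P hx]
  obtain ⟨v, y, hy, hyd⟩ := h1 (t + u) _ (hB.P_mem hwB (t := t + u) (i := i) (j := j))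
    (π.P_P _ _ _ _) (by rw [← hc, map_sub, kD_kD, pow_add, kD_kP, hdz, map_zero, sub_zero])
  refine ⟨u + v, y + kP E (x ^ v) (π.P (t + u) (i - 1) j w), fun T =>
    A.add_mem (hBA (hy T)) (kP_mem (hA.P_mem hw) T), ?_⟩
  rw [map_add, ← add_assoc, hyd, ← hc, pow_add x (t + u) v, kD_kP, map_sub, sub_add_cancel, kP_kP,
    pow_add]

lemma UV_of_GV {A B : Submodule R E} {i : ℤ} (h : GV x (A ⧸ B.comap A.subtype) i) :
    UV x A B i := by
  intro t z hz hi hdz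
  let q := (B.comap A.subtype).mkQ
  let z' : Finset (Fin n) → A := fun T => ⟨z T, hz T⟩
  have hD : ∀ (y : Fin n → R) (c : Finset (Fin n) → A) T,
      ((kD A y c T : A) : E) = kD E y (fun T => (c T : E)) T := fun y c T =>
    (congrFun (kD_map A.subtype y c) T).symm
  obtain ⟨u, w, hw⟩ := h t (fun T => q (z' T))
    (fun T hT => by
      have : z' T = 0 := Subtype.ext (hi T hT)
      rw [this, map_zero])
    (by
      rw [kD_map]
      funext T
      refine (Submodule.Quotient.mk_eq_zero _).2 ?_
      rw [Submodule.mem_comap, Submodule.subtype_apply, hD]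
      exact hdz T)
  choose v hv using fun T => Submodule.mkQ_surjective _ (w T)
  have hv' : w = fun T => q (v T) := funext fun T => (hv T).symm
  refine ⟨u, fun T => v T, fun T => (v T).2, fun T => ?_⟩
  have h1 := congrFun hw T
  rw [hv', kD_map, kP_map] at h1
  have h2 := (Submodule.Quotient.eq _).1 h1.symm
  rw [Submodule.mem_comap, Submodule.subtype_apply, Submodule.coe_sub, hD] at h2
  exact h2

end Graded

/-! ### Comparison with cochains in a fixed cohomological degree -/

section Compare

variable {R : Type} [CommRing R] {n : ℕ} {𝒜 : ℤ → AddSubgroup R}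
  {M : Type} [AddCommGroup M] [Module R M] {x : Fin n → R}

/-- Extension by zero of a degree `i` cochain. -/
def kExt {i : ℕ} (z : KCochain M n i) : Finset (Fin n) → M :=
  fun T => if h : T.card = i then z ⟨T, h⟩ else 0

lemma kExt_coe {i : ℕ} (z : KCochain M n i) (T : {T : Finset (Fin n) // T.card = i}) :
    kExt z T.1 = z T := by
  simp [kExt, T.2]

lemma kExt_supp {i : ℕ} (z : KCochain M n i) (T : Finset (Fin n)) (h : (T.card : ℤ) ≠ i) :
    kExt z T = 0 := by
  have : T.card ≠ i := by exact_mod_cast h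
  simp [kExt, this]

lemma kd_eq {t i : ℕ} (z : Finset (Fin n) → M) (T : {T : Finset (Fin n) // T.card = i + 1}) :
    kd x t i (fun U => z U.1) T = kD M (x ^ t) z T.1 :=
  Finset.sum_attach T.1 (fun l => sg l T.1 • ((x ^ t) l • z (T.1.erase l)))

lemma kd_eq_kExt {t i : ℕ} (z : KCochain M n i) (T : {T : Finset (Fin n) // T.card = i + 1}) :
    kd x t i z T = kD M (x ^ t) (kExt z) T.1 := by
  rw [← kd_eq]
  congr 1
  funext U
  exact (kExt_coe z U).symm

lemma kD_kExt_eq_zero {t i : ℕ} {z : KCochain M n i} (h : kd x t i z = 0) :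
    kD M (x ^ t) (kExt z) = 0 := by
  funext T
  by_cases hT : T.card = i + 1
  · rw [← kd_eq_kExt z ⟨T, hT⟩, h]
    rfl
  · exact kD_supp (i := (i : ℤ) + 1)
      (fun U hU => kExt_supp z U (by simpa using hU)) T (by exact_mod_cast hT)

lemma kIsCobound_of_kD {t : ℕ} : ∀ {i : ℕ} {z : KCochain M n i} {w : Finset (Fin n) → M},
    (∀ T : {T : Finset (Fin n) // T.card = i}, kD M (x ^ t) w T.1 = z T) → kIsCobound x t i z
  | 0, z, w, h => by
    funext T
    rw [← h T, kD_apply, Finset.card_eq_zero.1 T.2, Finset.sum_empty]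
    rfl
  | i + 1, z, w, h => ⟨fun U => w U.1, by funext T; rw [kd_eq, h]⟩

lemma exists_kD_of_kIsCobound {t : ℕ} : ∀ {i : ℕ} {z : KCochain M n i}, kIsCobound x t i z →
    ∃ w, kD M (x ^ t) w = kExt z
  | 0, z, h => ⟨0, by
      rw [map_zero, show z = 0 from h]
      funext T
      simp [kExt]⟩
  | i + 1, z, ⟨w, hw⟩ => ⟨kExt w, by
      funext T
      by_cases hT : T.card = i + 1
      · rw [← kd_eq_kExt w ⟨T, hT⟩, hw, ← kExt_coe z]
      · rw [kExt_supp z T (by exact_mod_cast hT)]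
        exact kD_supp (i := (i : ℤ) + 1)
          (fun U hU => kExt_supp w U (by simpa using hU)) T (by exact_mod_cast hT)⟩

lemma kP_kExt {u i : ℕ} (z : KCochain M n i) :
    kP M (x ^ u) (kExt z) = kExt (kpush x u i z) := by
  funext T
  by_cases hT : T.card = i
  · simp [kP_apply, kExt, hT, kpush]
  · simp [kP_apply, kExt, hT]

lemma not_lcNZ_of_GV {ℳ : ℤ → AddSubgroup M} {i : ℕ} {j : ℤ} (h : GV x M i) :
    ¬ lcNZ x ℳ i j := by
  rintro ⟨t, z, -, hz, hu⟩
  obtain ⟨u, w, hw⟩ := h t (kExt z) (kExt_supp z) (kD_kExt_eq_zero hz)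
  refine hu u (kIsCobound_of_kD (w := w) fun T => ?_)
  rw [hw, kP_kExt, kExt_coe]

lemma V_of_not_lcNZ {ℳ : ℤ → AddSubgroup M} (π : GrProj 𝒜 M) (hπ : ∀ j m, π.pr j m ∈ ℳ j)
    {i : ℕ} {j : ℤ} (h : ¬ lcNZ x ℳ i j) : V x π ⊤ ⊥ i j := by
  rw [V_bot_iff]
  intro t z _ hPz hdz
  by_contra hcon
  refine h ⟨t, fun T => z T.1, fun T => ?_, ?_, fun u hu => hcon ?_⟩
  · have := congrFun hPz T.1
    simp only [GrProj.P, kCut, T.2, if_true] at this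
    simp only
    rw [← this]
    exact_mod_cast hπ _ _
  · funext T
    rw [kd_eq, hdz]
    rfl
  · obtain ⟨w, hw⟩ := exists_kD_of_kIsCobound hu
    refine ⟨u, w, fun _ => trivial, ?_⟩
    rw [hw, ← kP_kExt]
    congr 1
    funext T
    by_cases hT : T.card = i
    · simp [kExt, hT]
    · have := congrFun hPz T
      have hT' : (T.card : ℤ) ≠ i := by exact_mod_cast hT
      simp only [GrProj.P, kCut, if_neg hT'] at this
      rw [kExt_supp _ _ hT', this]

end Compare

/-! ### The Koszul complex of the forms -/

section Forms

variable {R : Type} [CommRing R] {n s : ℕ} {𝒜 : ℤ → AddSubgroup R}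
  {M : Type} [AddCommGroup M] [Module R M] {x : Fin n → R} {f : Fin s → R} {d : Fin s → ℕ}

/-- The grading of the Koszul complex `K(f; M) = (Finset (Fin s) → M)`. The codifferential `kD`
is read as the Koszul differential: the component at `S` is the summand `M(-∑ l ∈ Sᶜ, d l)` in
homological degree `|Sᶜ|`. -/
def koszulGr (π : GrProj 𝒜 M) (d : Fin s → ℕ) : GrProj 𝒜 (Finset (Fin s) → M) where
  pr j :=
    { toFun := fun e S => π.pr (j - ∑ l ∈ Sᶜ, (d l : ℤ)) (e S)
      map_zero' := by funext S; simp
      map_add' := fun a b => by funext S; simp }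
  idem j m := by
    funext S
    exact π.idem _ _
  smul hg j m := by
    funext S
    simp only [AddMonoidHom.coe_mk, ZeroHom.coe_mk, Pi.smul_apply]
    rw [← π.smul hg]
    congr 2
    ring

lemma koszulGr_apply (π : GrProj 𝒜 M) (j : ℤ) (e : Finset (Fin s) → M) (S : Finset (Fin s)) :
    (koszulGr π d).pr j e S = π.pr (j - ∑ l ∈ Sᶜ, (d l : ℤ)) (e S) := rfl

lemma kD_koszulGr (π : GrProj 𝒜 M) (hf : ∀ l, f l ∈ 𝒜 (d l)) (j : ℤ)
    (e : Finset (Fin s) → M) :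
    kD M f ((koszulGr π d).pr j e) = (koszulGr π d).pr j (kD M f e) := by
  funext S
  rw [koszulGr_apply, kD_apply, kD_apply, map_sum]
  refine sum_congr rfl fun l hl => ?_
  rw [map_zsmul, koszulGr_apply, ← π.smul (hf l)]
  congr 3
  rw [Finset.compl_erase, Finset.sum_insert (by simpa using hl)]
  ring

variable (M) in
/-- The chains of homological degree `p` in the Koszul complex of `f`. -/
def kCh (R : Type) [CommRing R] [Module R M] (s p : ℕ) : Submodule R (Finset (Fin s) → M) where
  carrier := {e | ∀ S, S.card + p ≠ s → e S = 0}
  add_mem' ha hb S hS := by rw [Pi.add_apply, ha S hS, hb S hS, add_zero]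
  zero_mem' S _ := rfl
  smul_mem' r a ha S hS := by rw [Pi.smul_apply, ha S hS, smul_zero]

variable (M f) in
/-- The Koszul cycles of homological degree `p`. -/
noncomputable def kZ (p : ℕ) : Submodule R (Finset (Fin s) → M) :=
  kCh M R s p ⊓ LinearMap.ker (kD M f)

variable (M f) in
/-- The Koszul boundaries of homological degree `p`. -/
noncomputable def kB (p : ℕ) : Submodule R (Finset (Fin s) → M) :=
  (kCh M R s (p + 1)).map (kD M f)

lemma kCh_stable (π : GrProj 𝒜 M) (p : ℕ) : (koszulGr π d).Stable (kCh M R s p) := by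
  intro j m hm S hS
  rw [koszulGr_apply, hm S hS, map_zero]

lemma kZ_stable (π : GrProj 𝒜 M) (hf : ∀ l, f l ∈ 𝒜 (d l)) (p : ℕ) :
    (koszulGr π d).Stable (kZ M f p) := by
  intro j m hm
  refine Submodule.mem_inf.2 ⟨kCh_stable π p j m hm.1, ?_⟩
  rw [LinearMap.mem_ker, kD_koszulGr π hf, LinearMap.mem_ker.1 hm.2, map_zero]

lemma kB_stable (π : GrProj 𝒜 M) (hf : ∀ l, f l ∈ 𝒜 (d l)) (p : ℕ) :
    (koszulGr π d).Stable (kB M f p) := by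
  rintro j _ ⟨m, hm, rfl⟩
  rw [← kD_koszulGr π hf]
  exact Submodule.mem_map_of_mem (kCh_stable π _ j m hm)

lemma kD_mem_kCh {p : ℕ} {e : Finset (Fin s) → M} (he : e ∈ kCh M R s (p + 1)) :
    kD M f e ∈ kCh M R s p := by
  intro S hS
  rw [kD_apply]
  refine sum_eq_zero fun l hl => ?_
  have := Finset.card_erase_add_one hl
  rw [he (S.erase l) (by lia), smul_zero, smul_zero]

lemma kB_le_kZ (p : ℕ) : kB M f p ≤ kZ M f p := by
  rintro _ ⟨m, hm, rfl⟩
  exact Submodule.mem_inf.2 ⟨kD_mem_kCh hm, kD_kD f m⟩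

/-- Multiplication by `f l` maps Koszul cycles to boundaries. -/
lemma smul_mem_kB {p : ℕ} (l : Fin s) {z : Finset (Fin s) → M} (hz : z ∈ kZ M f p) :
    f l • z ∈ kB M f p := by
  refine ⟨kH M l z, ?_, ?_⟩
  · intro S hS
    rw [kH]
    split_ifs with hl
    · rfl
    · rw [hz.1, smul_zero]
      rw [card_insert_of_notMem hl]
      lia
  · have h := kD_kH_add f l z
    have e : kH M l (0 : Finset (Fin s) → M) = 0 := by funext T; simp [kH]
    rwa [LinearMap.mem_ker.1 hz.2, e, add_zero] at h

/-- The Koszul homology `H_p(f; M)`. -/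
abbrev kHom (M : Type) [AddCommGroup M] [Module R M] (f : Fin s → R) (p : ℕ) : Type :=
  kZ M f p ⧸ (kB M f p).comap (kZ M f p).subtype

lemma annihilator_le_kHom (p : ℕ) :
    Module.annihilator R M ⊔ Ideal.span (Set.range f) ≤
      Module.annihilator R (kHom M f p) := by
  have key : ∀ r : R, (∀ z ∈ kZ M f p, r • z ∈ kB M f p) →
      r ∈ Module.annihilator R (kHom M f p) := by
    intro r h
    rw [Module.mem_annihilator]
    intro q
    obtain ⟨z, rfl⟩ := Submodule.mkQ_surjective _ q
    rw [← map_smul]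
    exact (Submodule.Quotient.mk_eq_zero _).2 (h z.1 z.2)
  refine sup_le (fun r hr => key r fun z _ => ?_) (Ideal.span_le.2 ?_)
  · have : r • z = 0 := by
      funext S
      exact Module.mem_annihilator.1 hr (z S)
    rw [this]
    exact Submodule.zero_mem _
  · rintro _ ⟨l, rfl⟩
    exact key _ fun z hz => smul_mem_kB l hz

/-- Koszul homology is supported on the support of `M / f M`. -/
lemma supportDim_kHom_le [IsNoetherianRing R] [Module.Finite R M] (p : ℕ) :
    Module.supportDim R (kHom M f p) ≤
      Module.supportDim R (M ⧸ (Ideal.span (Set.range f) • (⊤ : Submodule R M))) := by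
  have hsub : Module.support R (kHom M f p) ⊆
      Module.support R (M ⧸ (Ideal.span (Set.range f) • (⊤ : Submodule R M))) := by
    rw [Module.support_quotient, Module.support_eq_zeroLocus, Module.support_eq_zeroLocus]
    intro P hP
    have hP' := (annihilator_le_kHom (M := M) (f := f) p).trans hP
    exact ⟨le_sup_left.trans hP', le_sup_right.trans hP'⟩
  exact Order.krullDim_le_of_strictMono (fun P => ⟨P.1, hsub P.2⟩) fun _ _ h => h

/-- `H^i(K_p)_j` is a direct sum of shifted pieces of `H^i(M)`. -/
lemma V_kCh (π : GrProj 𝒜 M) {p : ℕ} {i j : ℤ}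
    (h : ∀ S : Finset (Fin s), S.card = p → V x π ⊤ ⊥ i (j - ∑ l ∈ S, (d l : ℤ))) :
    V x (koszulGr π d) (kCh M R s p) ⊥ i j := by
  rw [V_bot_iff]
  intro t z hz hPz hdz
  have comp : ∀ S : Finset (Fin s), ∃ (u : ℕ) (w : Finset (Fin n) → M),
      (S.card + p ≠ s → w = 0) ∧
        kD M (x ^ (t + u)) w = kP M (x ^ u) (fun T => z T S) := by
    intro S
    by_cases hS : S.card + p = s
    · have hc : Sᶜ.card = p := by
        rw [Finset.card_compl, Fintype.card_fin]
        lia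
      have h1 := V_bot_iff.1 (h Sᶜ hc) t (fun T => z T S) (fun _ => trivial)
        (by
          conv_rhs => rw [← hPz]
          funext T
          simp only [GrProj.P, kCut]
          split_ifs
          · rw [koszulGr_apply]
            congr 2
            ring
          · rfl)
        (by
          have := kD_map (LinearMap.proj (R := R) (φ := fun _ : Finset (Fin s) => M) S) (x ^ t) z
          simp only [LinearMap.proj_apply] at this
          rw [this, hdz]
          rfl)
      obtain ⟨u, w, -, hw⟩ := h1
      exact ⟨u, w, fun h => absurd hS h, hw⟩
    · refine ⟨0, 0, fun _ => rfl, ?_⟩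
      rw [map_zero]
      funext T
      rw [kP_apply, hz T S hS, smul_zero]
      rfl
  choose u w hw0 hw using comp
  let U := ∑ S, u S
  have hU : ∀ S, u S ≤ U := fun S => Finset.single_le_sum (fun _ _ => Nat.zero_le _) (mem_univ S)
  refine ⟨U, fun T S => kP M (x ^ (U - u S)) (w S) T, fun T S hS => ?_, ?_⟩
  · simp only
    rw [hw0 S hS, map_zero]
    rfl
  · funext T S
    have h1 := kD_map (LinearMap.proj (R := R) (φ := fun _ : Finset (Fin s) => M) S)
      (x ^ (t + U)) (fun T S => kP M (x ^ (U - u S)) (w S) T)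
    have h2 := kP_map (LinearMap.proj (R := R) (φ := fun _ : Finset (Fin s) => M) S)
      (x ^ U) z
    simp only [LinearMap.proj_apply] at h1 h2
    rw [← congrFun h1 T, ← congrFun h2 T]
    have h3 : kD M (x ^ (t + U)) (kP M (x ^ (U - u S)) (w S)) =
        kP M (x ^ U) (fun T => z T S) := by
      have e1 : t + U = (t + u S) + (U - u S) := by have := hU S; lia
      have e2 : U = u S + (U - u S) := by have := hU S; lia
      rw [e1, pow_add, kD_kP, hw, kP_kP, ← pow_add, ← e2]
    exact congrFun h3 T

/-- Vanishing of `H^{p+i}(K_p)_j` for all `p` forces `H^i(K_0 / B_0)_j` to vanish, because the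
Koszul homology in positive degrees has no local cohomology above degree `1`. -/
lemma V_kCh_kB (hx : ∀ l, x l ∈ 𝒜 1) (π : GrProj 𝒜 M) (hf : ∀ l, f l ∈ 𝒜 (d l)) {i : ℕ} {j : ℤ}
    (hK : ∀ p : ℕ, V x (koszulGr π d) (kCh M R s p) ⊥ ((p + i : ℕ) : ℤ) j)
    (hH : ∀ (p : ℕ) (q : ℤ), 2 ≤ q → UV x (kZ M f p) (kB M f p) q) :
    V x (koszulGr π d) (kCh M R s 0) (kB M f 0) i j := by
  have step : ∀ p : ℕ, V x (koszulGr π d) (kZ M f (p + 1)) ⊥ ((p + 2 + i : ℕ) : ℤ) j →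
      V x (koszulGr π d) (kB M f p) ⊥ ((p + 1 + i : ℕ) : ℤ) j := by
    intro p h
    refine V_map (kCh_stable π (p + 1)) (kD M f) (kD_koszulGr π hf) ?_
    refine V_quotient hx inf_le_left (kZ_stable π hf (p + 1)) (hK (p + 1)) ?_
    have e : (((p + 1 + i : ℕ) : ℤ) + 1) = ((p + 2 + i : ℕ) : ℤ) := by push_cast; ring
    rw [e]
    exact h
  have hZ : ∀ r p : ℕ, n ≤ p + r →
      V x (koszulGr π d) (kZ M f (p + 1)) ⊥ ((p + 2 + i : ℕ) : ℤ) j := by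
    intro r
    induction r with
    | zero =>
      -- there are no cochains in degrees above `n`
      intro p hp
      rw [V_bot_iff]
      intro t z _ hPz _
      have h0 : z = 0 := by
        rw [← hPz]
        funext T
        have := Finset.card_le_univ T
        rw [Fintype.card_fin] at this
        rw [GrProj.P, kCut, if_neg (by lia)]
        rfl
      exact ⟨0, 0, fun T => Submodule.zero_mem _, by rw [h0, map_zero, map_zero]⟩
    | succ r ih =>
      intro p hp
      have h1 := step (p + 1) (ih (p + 1) (by lia))
      have e : p + 1 + 1 + i = p + 2 + i := by ring
      rw [e] at h1
      exact V_extension hx (kB_le_kZ _) (kZ_stable π hf _) (kB_stable π hf _) h1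
        (hH _ _ (by lia))
  have h0 := step 0 (hZ n 0 (by lia))
  refine V_quotient hx ((kB_le_kZ 0).trans inf_le_left) (kB_stable π hf 0) ?_ ?_
  · simpa using hK 0
  · have e : ((0 + 1 + i : ℕ) : ℤ) = (i : ℤ) + 1 := by push_cast; ring
    rwa [e] at h0

lemma mem_kB_zero_apply {e : Finset (Fin s) → M} (he : e ∈ kB M f 0) :
    e univ ∈ Ideal.span (Set.range f) • (⊤ : Submodule R M) := by
  obtain ⟨m, -, rfl⟩ := he
  rw [kD_apply]
  exact Submodule.sum_mem _ fun l _ => zsmul_mem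
    (Submodule.smul_mem_smul (Ideal.subset_span (Set.mem_range_self l)) Submodule.mem_top) _

lemma single_mem_kB_zero {m : M} (hm : m ∈ Ideal.span (Set.range f) • (⊤ : Submodule R M)) :
    (Pi.single univ m : Finset (Fin s) → M) ∈ kB M f 0 := by
  have hle : Ideal.span (Set.range f) • (⊤ : Submodule R M) ≤
      (kB M f 0).comap (LinearMap.single R (fun _ : Finset (Fin s) => M) univ) := by
    rw [Submodule.span_smul_eq]
    rw [Submodule.set_smul_le_iff]
    rintro _ m ⟨l, rfl⟩ -
    rw [Submodule.mem_comap, map_smul, LinearMap.single_apply]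
    refine smul_mem_kB l (Submodule.mem_inf.2 ⟨fun S hS => ?_, ?_⟩)
    · refine Pi.single_eq_of_ne (fun h => hS ?_) _
      rw [h, card_univ, Fintype.card_fin, add_zero]
    · rw [LinearMap.mem_ker]
      funext S
      rw [kD_apply]
      refine sum_eq_zero fun b hb => ?_
      rw [Pi.single_eq_of_ne, smul_zero, smul_zero]
      exact fun h => notMem_erase b S (h ▸ mem_univ b)
  exact hle hm

/-- Identification of `K_0 / B_0` with `M / f M` on local cohomology. -/
lemma not_lcNZ_quotient {ℳ : ℤ → AddSubgroup M} (π : GrProj 𝒜 M)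
    (hπ : ∀ j, ∀ m ∈ ℳ j, π.pr j m = m) {i : ℕ} {j : ℤ}
    (h : V x (koszulGr π d) (kCh M R s 0) (kB M f 0) i j) :
    ¬ lcNZ x (qmPiece (Ideal.span (Set.range f) • (⊤ : Submodule R M)) ℳ) i j := by
  rintro ⟨t, z, hst, hz, hcob⟩
  let q := (Ideal.span (Set.range f) • (⊤ : Submodule R M)).mkQ
  choose m hm hmz using hst
  have hqm : (fun T => q (kExt m T)) = kExt z := by
    funext T
    by_cases hT : T.card = i
    · simp only [kExt, hT, dif_pos]
      exact hmz ⟨T, hT⟩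
    · simp [kExt, hT]
  let ι := LinearMap.single R (fun _ : Finset (Fin s) => M) univ
  obtain ⟨u, w, -, hw⟩ := h t (fun T => ι (kExt m T))
    (fun T S hS => Pi.single_eq_of_ne
      (fun e => hS (by rw [e, card_univ, Fintype.card_fin, add_zero])) _)
    (by
      funext T
      simp only [GrProj.P, kCut]
      split_ifs with hT
      · have hT' : T.card = i := by exact_mod_cast hT
        funext S
        rw [koszulGr_apply]
        by_cases hS : S = univ
        · subst hS
          have e : ∀ a : M, ι a univ = a := fun a => Pi.single_eq_same _ _
          rw [e, compl_univ, sum_empty, sub_zero]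
          refine hπ _ _ ?_
          simp only [kExt, hT', dif_pos]
          exact_mod_cast hm ⟨T, hT'⟩
        · have e : ∀ a : M, ι a S = 0 := fun a => Pi.single_eq_of_ne hS _
          rw [e, map_zero]
      · rw [kExt_supp m T hT, map_zero])
    (fun T => by
      rw [kD_map]
      refine single_mem_kB_zero ?_
      rw [← Submodule.Quotient.mk_eq_zero]
      have h1 := congrFun (kD_map q (x ^ t) (kExt m)) T
      rw [hqm, kD_kExt_eq_zero hz] at h1
      exact h1.symm)
  refine hcob u (kIsCobound_of_kD (w := fun T => q (w T univ)) fun T => ?_)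
  have h1 := mem_kB_zero_apply (hw T.1)
  have h2 : q ((kP _ (x ^ u) (fun T => ι (kExt m T)) - kD _ (x ^ (t + u)) w) T.1 univ) = 0 :=
    (Submodule.Quotient.mk_eq_zero _).2 h1
  rw [Pi.sub_apply, Pi.sub_apply, map_sub, sub_eq_zero] at h2
  let φ := q.comp (LinearMap.proj (R := R) (φ := fun _ : Finset (Fin s) => M) univ)
  have h3 := congrFun (kD_map φ (x ^ (t + u)) w) T.1
  have h4 := congrFun (kP_map φ (x ^ u) (fun T => ι (kExt m T))) T.1
  have h5 : (fun T => φ (ι (kExt m T))) = kExt z := by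
    rw [← hqm]
    funext T
    exact congrArg q (Pi.single_eq_same _ _)
  rw [h5, kP_kExt, kExt_coe] at h4
  rw [h4]
  exact h3.trans h2.symm

end Forms

/-! ### Sums of the largest degrees -/

section Degrees

/-- Comparison of the sum over `S` with the sum over the first `|S| + i` indices. -/
lemma sum_add_le {s : ℕ} (d : Fin s → ℕ) (hdmono : ∀ i j : Fin s, i ≤ j → d j ≤ d i)
    (hd1 : ∀ i, 1 ≤ d i) (S : Finset (Fin s)) (i q : ℕ) (hq : S.card + i = q) (hqs : q ≤ s) :
    (∑ l ∈ S, (d l : ℤ)) + i ≤ ∑ t ∈ univ.filter (fun t : Fin s => (t : ℕ) < q), (d t : ℤ) := by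
  set I := univ.filter (fun t : Fin s => (t : ℕ) < q) with hI
  have hIc : I.card = q := by
    rw [hI, Fin.card_filter_val_lt]
    exact min_eq_right hqs
  -- `c` separates the degrees with index `≥ q` from those with index `< q`
  obtain ⟨c, hc1, hcI, hcS⟩ : ∃ c : ℕ, 1 ≤ c ∧ (∀ t ∈ I, c ≤ d t) ∧ ∀ t ∉ I, d t ≤ c := by
    by_cases h : q < s
    · refine ⟨d ⟨q, h⟩, hd1 _, fun t ht => hdmono _ _ ?_, fun t ht => hdmono _ _ ?_⟩
      · simp only [hI, mem_filter, mem_univ, true_and] at ht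
        exact Fin.le_def.2 ht.le
      · simp only [hI, mem_filter, mem_univ, true_and, not_lt] at ht
        exact Fin.le_def.2 ht
    · refine ⟨1, le_rfl, fun t _ => hd1 t, fun t ht => absurd ?_ ht⟩
      simp only [hI, mem_filter, mem_univ, true_and]
      have := t.2
      lia
  have h1 := Finset.sum_inter_add_sum_sdiff S I (fun t => (d t : ℤ))
  have h2 := Finset.sum_inter_add_sum_sdiff I S (fun t => (d t : ℤ))
  have h3 := Finset.card_inter_add_card_sdiff S I
  have h4 := Finset.card_inter_add_card_sdiff I S
  rw [inter_comm I S] at h2 h4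
  have h5 : ∑ t ∈ S \ I, (d t : ℤ) ≤ (S \ I).card • (c : ℤ) :=
    Finset.sum_le_card_nsmul _ _ _ fun t ht => by exact_mod_cast hcS t (mem_sdiff.1 ht).2
  have h6 : (I \ S).card • (c : ℤ) ≤ ∑ t ∈ I \ S, (d t : ℤ) :=
    Finset.card_nsmul_le_sum _ _ _ fun t ht => by exact_mod_cast hcI t (mem_sdiff.1 ht).1
  have h7 : (I \ S).card = (S \ I).card + i := by lia
  rw [h7, nsmul_eq_mul] at h6
  rw [nsmul_eq_mul] at h5
  push_cast at h6
  have h8 : (i : ℤ) ≤ i * c := le_mul_of_one_le_right (by positivity) (by exact_mod_cast hc1)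
  linarith

end Degrees

/-! ### The bound over a Noetherian ring -/

section Bound

variable {R : Type} [CommRing R] {n s : ℕ} {𝒜 : ℤ → AddSubgroup R}
  {M : Type} [AddCommGroup M] [Module R M] {x : Fin n → R} {f : Fin s → R} {d : Fin s → ℕ}

/-- The first inequality for forms over any Noetherian ring, phrased with projections `π` onto the
homogeneous components of `M`. -/
theorem reg_bound [IsNoetherianRing R] [Module.Finite R M] (hx : ∀ l, x l ∈ 𝒜 1)
    {ℳ : ℤ → AddSubgroup M} (π : GrProj 𝒜 M) (hπ : ∀ j m, π.pr j m ∈ ℳ j)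
    (hπ' : ∀ j, ∀ m ∈ ℳ j, π.pr j m = m)
    (hdmono : ∀ i j : Fin s, i ≤ j → d j ≤ d i) (hd1 : ∀ i, 1 ≤ d i)
    (hf : ∀ l, f l ∈ 𝒜 (d l)) {δ : ℕ} (hδ : Module.supportDim R M = (δ : WithBot ℕ∞))
    (hδs : δ ≤ s)
    (hM' : Module.supportDim R (M ⧸ (Ideal.span (Set.range f) • (⊤ : Submodule R M))) = 1)
    (i : ℕ) (j : ℤ)
    (h : lcNZ x (qmPiece (Ideal.span (Set.range f) • (⊤ : Submodule R M)) ℳ) i j) :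
    ∃ p : ℕ, p ≤ δ ∧ ∃ j' : ℤ, lcNZ x ℳ p j' ∧
      j + i ≤ j' + ∑ t ∈ univ.filter (fun t : Fin s => (t : ℕ) < p), (d t : ℤ) := by
  have lt2 : (1 : WithBot ℕ∞) < ((2 : ℕ) : WithBot ℕ∞) := by
    exact_mod_cast (by norm_num : (1 : ℕ) < 2)
  by_contra! hcon
  refine not_lcNZ_quotient (d := d) π hπ' (V_kCh_kB hx π hf (fun p => V_kCh π fun S hS => ?_)
    fun p q hq => UV_of_GV (GV_of_supportDim_lt 2 _ ?_ q (by exact_mod_cast hq))) h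
  · refine V_of_not_lcNZ π hπ fun hnz => ?_
    by_cases hp : p + i ≤ δ
    · have h1 := hcon (p + i) hp _ hnz
      have h2 := sum_add_le d hdmono hd1 S i (p + i) (by rw [hS]) (hp.trans hδs)
      linarith
    · refine not_lcNZ_of_GV (GV_of_supportDim_lt (δ + 1) M ?_ _ (by lia)) hnz
      rw [hδ]
      exact_mod_cast Nat.lt_succ_self δ
  · exact (supportDim_kHom_le p).trans_lt (hM' ▸ lt2)

end Bound

/-! ### The projections of a graded module -/

section Projections

variable {R : Type} [CommRing R] {𝒜 : ℤ → AddSubgroup R} {M : Type} [AddCommGroup M] [Module R M]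

/-- The projections of the direct sum decomposition of a graded module. -/
lemma exists_grProj {ℳ : ℤ → AddSubgroup M} (h : IsGradedMod 𝒜 ℳ) :
    ∃ π : GrProj 𝒜 M, (∀ j m, π.pr j m ∈ ℳ j) ∧ ∀ j, ∀ m ∈ ℳ j, π.pr j m = m := by
  classical
  let _ : DirectSum.Decomposition ℳ := h.internal.chooseDecomposition
  let pr : ℤ → M →+ M := fun j =>
    { toFun := fun m => (DirectSum.decompose ℳ m j : M)
      map_zero' := by simp
      map_add' := fun a b => by simp [DirectSum.decompose_add] }
  have hpr : ∀ j m, pr j m ∈ ℳ j := fun j m => (DirectSum.decompose ℳ m j).2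
  have hsame : ∀ j, ∀ m ∈ ℳ j, pr j m = m := fun j m hm => DirectSum.decompose_of_mem_same ℳ hm
  have hne : ∀ {i j m}, m ∈ ℳ i → i ≠ j → pr j m = 0 := fun hm hij =>
    DirectSum.decompose_of_mem_ne ℳ hm hij
  refine ⟨⟨pr, fun j m => hsame j _ (hpr j m), ?_⟩, hpr, hsame⟩
  intro e g hg j m
  induction m using DirectSum.Decomposition.inductionOn ℳ with
  | zero => simp
  | @homogeneous i m =>
    have hm := h.smul_mem hg m.2
    by_cases hij : i = j
    · subst hij
      rw [hsame i _ m.2, add_comm, hsame _ _ hm]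
    · rw [hne m.2 hij, hne hm (by lia), smul_zero]
  | add a b ha hb => rw [smul_add, map_add, map_add, ha, hb, smul_add]

end Projections

end KReg

/-- **Regularity of quotients by forms in small dimension** (Corollary 5.8, case
`dim M' = 1`).  Let `R = k[X_1, …, X_N]` be a standard graded polynomial ring over a field,
`M` a finitely generated graded `R`-module of dimension `δ` and `f_1, …, f_s` homogeneous
forms of degrees `d_1 ≥ ⋯ ≥ d_s ≥ 1`.  Set `M' := M/(f_1, …, f_s)M`.  If `dim M' = 1`,
then `reg(M') ≤ max_{0 ≤ p ≤ δ} (a_p(M) + d_1 + ⋯ + d_p) ≤ reg(M) + ∑_{i=1}^{δ} (d_i − 1)`,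
where both inequalities are expressed elementwise via nonvanishing of graded local
cohomology (`lcNZ`). -/
theorem reg_quotient_by_forms_dim_one (k : Type) [Field k] (N : ℕ)
    (M : Type) [AddCommGroup M] [Module (MvPolynomial (Fin N) k) M]
    [Module.Finite (MvPolynomial (Fin N) k) M]
    (ℳ : ℤ → AddSubgroup M) (hgm : IsGradedMod (polyGrading k N) ℳ)
    (s : ℕ) (f : Fin s → MvPolynomial (Fin N) k) (d : Fin s → ℕ)
    (hdmono : ∀ i j : Fin s, i ≤ j → d j ≤ d i) (hd1 : ∀ i, 1 ≤ d i)
    (hf : ∀ i, f i ∈ polyGrading k N (d i))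
    (δ : ℕ) (hδ : mdim (MvPolynomial (Fin N) k) M = (δ : WithBot (WithTop ℕ)))
    (hδs : δ ≤ s)
    (hM'dim :
      mdim (MvPolynomial (Fin N) k)
        (M ⧸ (Ideal.span (Set.range f) • (⊤ : Submodule (MvPolynomial (Fin N) k) M))) =
        (1 : WithBot (WithTop ℕ))) :
    (∀ (i : ℕ) (j : ℤ),
        lcNZ (MvPolynomial.X : Fin N → MvPolynomial (Fin N) k)
          (qmPiece (Ideal.span (Set.range f) • (⊤ : Submodule (MvPolynomial (Fin N) k) M)) ℳ)
          i j →
        ∃ p : ℕ, p ≤ δ ∧ ∃ j' : ℤ,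
          lcNZ (MvPolynomial.X : Fin N → MvPolynomial (Fin N) k) ℳ p j' ∧
          j + i ≤ j' + ∑ t ∈ Finset.univ.filter (fun t : Fin s => (t : ℕ) < p), (d t : ℤ)) ∧
      (∀ (i : ℕ) (j : ℤ),
        lcNZ (MvPolynomial.X : Fin N → MvPolynomial (Fin N) k)
          (qmPiece (Ideal.span (Set.range f) • (⊤ : Submodule (MvPolynomial (Fin N) k) M)) ℳ)
          i j →
        ∃ (p : ℕ) (j' : ℤ),
          lcNZ (MvPolynomial.X : Fin N → MvPolynomial (Fin N) k) ℳ p j' ∧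
          j + i ≤ (j' + p) +
            ∑ t ∈ Finset.univ.filter (fun t : Fin s => (t : ℕ) < δ), ((d t : ℤ) - 1)) := by
  have hx : ∀ l : Fin N, (MvPolynomial.X l : MvPolynomial (Fin N) k) ∈ polyGrading k N 1 := by
    intro l
    simp only [polyGrading, zero_le_one, if_true]
    exact MvPolynomial.isHomogeneous_X k l
  obtain ⟨π, hπ, hπ'⟩ := KReg.exists_grProj hgm
  have hδ' : Module.supportDim (MvPolynomial (Fin N) k) M = (δ : WithBot ℕ∞) := by
    rw [Module.supportDim_eq_ringKrullDim_quotient_annihilator]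
    exact hδ
  have hM' : Module.supportDim (MvPolynomial (Fin N) k)
      (M ⧸ (Ideal.span (Set.range f) • (⊤ : Submodule (MvPolynomial (Fin N) k) M))) = 1 := by
    rw [Module.supportDim_eq_ringKrullDim_quotient_annihilator]
    exact hM'dim
  have main := KReg.reg_bound hx π hπ hπ' hdmono hd1 hf hδ' hδs hM'
  refine ⟨main, fun i j h => ?_⟩
  obtain ⟨p, hp, j', hnz, hle⟩ := main i j h
  refine ⟨p, j', hnz, hle.trans ?_⟩
  -- `∑_{t < p} d_t = p + ∑_{t < p} (d_t - 1)`, and the summands `d_t - 1` are nonnegative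
  have hcard : (Finset.univ.filter (fun t : Fin s => (t : ℕ) < p)).card = p := by
    rw [Fin.card_filter_val_lt]
    exact min_eq_right (hp.trans hδs)
  have h1 : ∑ t ∈ Finset.univ.filter (fun t : Fin s => (t : ℕ) < p), (d t : ℤ) =
      p + ∑ t ∈ Finset.univ.filter (fun t : Fin s => (t : ℕ) < p), ((d t : ℤ) - 1) := by
    rw [Finset.sum_sub_distrib, Finset.sum_const, hcard]
    simp
  have h2 : ∑ t ∈ Finset.univ.filter (fun t : Fin s => (t : ℕ) < p), ((d t : ℤ) - 1) ≤
      ∑ t ∈ Finset.univ.filter (fun t : Fin s => (t : ℕ) < δ), ((d t : ℤ) - 1) := by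
    refine Finset.sum_le_sum_of_subset_of_nonneg (fun t ht => ?_) fun t _ _ => ?_
    · simp only [Finset.mem_filter, Finset.mem_univ, true_and] at ht ⊢
      exact ht.trans_le hp
    · have := hd1 t
      lia
  linarith
end

section
/- Let S be a Noetherian standard graded ring over a Noetherian ring S_0 and I a homogeneous S-ideal with cd(S/I) ≤ 1 (cohomological dimension with respect to S_+). Then for all m ≥ 0, a_1(S/I^{m+1}) ≤ a_1(S/I) + m · b_0^S(I), where b_0^S(I) is the maximal degree of a minimal generator of I. -/
/-! The layers `I^k / I^(k+1)` for `k ≤ m` are `S/I`-modules generated in degrees `d ≤ k * D ≤ m * D`.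
As `S/I` has cohomological dimension at most one, `H²` vanishes on finitely generated graded
`S/I`-modules, so `H¹` is right exact on them and `H¹(I^k / I^(k+1))_j = 0` as soon as
`H¹(S/I)_{j'} = 0` for all `j' ≥ j - m * D`.  Half-exactness of `H¹` along the filtration of
`S / I^(m+1)` by powers of `I` then yields `H¹(S / I^(m+1))_j = 0`, which is the contrapositive of
the theorem.

All modules involved are subquotients `A/B` of `S` by homogeneous ideals, so the argument is run
on Koszul cochains with values in `S`: `RelVanish` expresses vanishing of `H^{p+1}(A/B)_j`.
The long exact sequence enters through `RelVanish.trans` (extensions) and `relVanish_cyclic`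
(the sequence `0 → ((B : g)/I)(-d) → (S/I)(-d) → (B + (g))/B → 0`); `relVanish_of_generators`
combines them along a set of homogeneous generators of `A`.  Descending induction on the
cohomological degree gives the required vanishing of `H²` in `relVanish_of_cd`.
-/

open Finset

/-! ### The Koszul cocomplex -/

section KoszulLemmas

variable {S : Type} [CommRing S] {M N : Type} [AddCommGroup M] [Module S M]
  [AddCommGroup N] [Module S N] {n : ℕ}

lemma kd_sub (x : Fin n → S) (t i : ℕ) (z w : KCochain M n i) :
    kd x t i (z - w) = kd x t i z - kd x t i w := by
  funext T
  simp [kd, smul_sub, Finset.sum_sub_distrib]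

lemma kd_add (x : Fin n → S) (t i : ℕ) (z w : KCochain M n i) :
    kd x t i (z + w) = kd x t i z + kd x t i w := by
  funext T
  simp [kd, smul_add, Finset.sum_add_distrib]

lemma kd_map (f : M →ₗ[S] N) (x : Fin n → S) (t i : ℕ) (z : KCochain M n i) :
    kd x t i (fun T => f (z T)) = fun T => f (kd x t i z T) := by
  funext T
  simp [kd, map_sum, map_zsmul]

lemma kpush_map (f : M →ₗ[S] N) (x : Fin n → S) (u i : ℕ) (z : KCochain M n i) :
    kpush x u i (fun T => f (z T)) = fun T => f (kpush x u i z T) := by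
  funext T
  simp [kpush]

lemma kd_mem (P : Submodule S M) (x : Fin n → S) (t i : ℕ) {z : KCochain M n i}
    (hz : ∀ T, z T ∈ P) (T) : kd x t i z T ∈ P :=
  P.sum_mem fun _ _ => zsmul_mem (P.smul_mem _ (hz _)) _

lemma kpush_mem (P : Submodule S M) (x : Fin n → S) (u i : ℕ) {z : KCochain M n i}
    (hz : ∀ T, z T ∈ P) (T) : kpush x u i z T ∈ P :=
  P.smul_mem _ (hz _)

lemma kpush_add_exp (x : Fin n → S) (u v i : ℕ) (z : KCochain M n i) :
    kpush x v i (kpush x u i z) = kpush x (u + v) i z := by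
  funext T
  simp only [kpush, smul_smul, ← Finset.prod_mul_distrib, ← pow_add]
  simp only [add_comm]

lemma kpush_sub (x : Fin n → S) (u i : ℕ) (z w : KCochain M n i) :
    kpush x u i (z - w) = kpush x u i z - kpush x u i w := by
  funext T
  simp [kpush, smul_sub]

/-- The transition maps form a morphism of cocomplexes. -/
lemma kd_kpush (x : Fin n → S) (t u i : ℕ) (z : KCochain M n i) :
    kd x (t + u) i (kpush x u i z) = kpush x u (i + 1) (kd x t i z) := by
  funext T
  simp only [kd, kpush, Finset.smul_sum]
  refine Finset.sum_congr rfl fun s _ => ?_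
  rw [smul_comm (∏ s ∈ T.1, x s ^ u) ((-1 : ℤ) ^ _)]
  congr 1
  rw [smul_smul, smul_smul, ← Finset.mul_prod_erase T.1 (fun a => x a ^ u) s.2, pow_add]
  congr 1
  ring

/-- Extension of a cochain by zero to all subsets, which removes the dependent types from the
formula for the codifferential. -/
noncomputable def kext {i : ℕ} (z : KCochain M n i) (U : Finset (Fin n)) : M :=
  if h : U.card = i then z ⟨U, h⟩ else 0

/-- The sign attached to an element `s` of `T` in the Koszul codifferential. -/
def ksign (T : Finset (Fin n)) (s : Fin n) : ℤ := (-1) ^ (T.filter (fun a => a < s)).card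

lemma kd_apply (x : Fin n → S) (t i : ℕ) (z : KCochain M n i)
    (T : {T : Finset (Fin n) // T.card = i + 1}) :
    kd x t i z T = ∑ s ∈ T.1, ksign T.1 s • (x s ^ t • kext z (T.1.erase s)) := by
  rw [← Finset.sum_attach]
  refine Finset.sum_congr rfl fun s _ => ?_
  have h : (T.1.erase s.1).card = i := by
    rw [Finset.card_erase_of_mem s.2, T.2]; rfl
  rw [kext, dif_pos h]
  rfl

lemma ksign_mul_of_lt {T : Finset (Fin n)} {r s : Fin n} (hr : r ∈ T) (h : r < s) :
    ksign T s * ksign (T.erase s) r = -(ksign T r * ksign (T.erase r) s) := by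
  have h1 : (T.erase s).filter (fun a => a < r) = T.filter (fun a => a < r) := by
    ext a
    simp only [Finset.mem_filter, Finset.mem_erase]
    constructor
    · tauto
    · rintro ⟨ha, hl⟩
      exact ⟨⟨(hl.trans h).ne, ha⟩, hl⟩
  have h2 : ((T.filter (fun a => a < s)).erase r).card + 1 = (T.filter (fun a => a < s)).card :=
    Finset.card_erase_add_one (Finset.mem_filter.2 ⟨hr, h⟩)
  have h3 : (T.erase r).filter (fun a => a < s) = (T.filter (fun a => a < s)).erase r := by
    ext a
    simp only [Finset.mem_filter, Finset.mem_erase]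
    tauto
  simp only [ksign, h1, h3, ← h2, pow_succ]
  ring

lemma ksign_mul {T : Finset (Fin n)} {r s : Fin n} (hr : r ∈ T) (hs : s ∈ T) (h : r ≠ s) :
    ksign T s * ksign (T.erase s) r = -(ksign T r * ksign (T.erase r) s) := by
  rcases lt_or_gt_of_ne h with h | h
  · exact ksign_mul_of_lt hr h
  · rw [ksign_mul_of_lt hs h, neg_neg]

/-- The codifferential squares to zero: the terms indexed by `(s, r)` and `(r, s)` cancel. -/
lemma kd_kd (x : Fin n → S) (t i : ℕ) (z : KCochain M n i) :
    kd x t (i + 1) (kd x t i z) = 0 := by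
  funext T
  have hexp : kd x t (i + 1) (kd x t i z) T = ∑ s ∈ T.1, ∑ r ∈ T.1.erase s,
      (ksign T.1 s * ksign (T.1.erase s) r) •
        ((x s ^ t * x r ^ t) • kext z ((T.1.erase s).erase r)) := by
    rw [kd_apply]
    refine Finset.sum_congr rfl fun s hs => ?_
    have h : (T.1.erase s).card = i + 1 := by
      rw [Finset.card_erase_of_mem hs, T.2]; rfl
    rw [kext, dif_pos h, kd_apply, Finset.smul_sum, Finset.smul_sum]
    refine Finset.sum_congr rfl fun r _ => ?_
    rw [smul_comm (x s ^ t) (ksign (T.1.erase s) r), smul_smul, smul_smul]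
  rw [hexp, Finset.sum_sigma']
  refine Finset.sum_involution (fun p _ => ⟨p.2, p.1⟩) ?_ ?_ ?_ ?_
  · rintro ⟨s, r⟩ hp
    simp only [Finset.mem_sigma, Finset.mem_erase] at hp
    simp only
    rw [ksign_mul hp.2.2 hp.1 hp.2.1, Finset.erase_right_comm, mul_comm (x s ^ t), neg_smul,
      neg_add_cancel]
  · rintro ⟨s, r⟩ hp _ heq
    simp only [Finset.mem_sigma, Finset.mem_erase] at hp
    exact hp.2.1 (Sigma.mk.inj_iff.1 heq).1
  · rintro ⟨s, r⟩ hp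
    simp only [Finset.mem_sigma, Finset.mem_erase] at hp ⊢
    exact ⟨hp.2.2, hp.2.1.symm, hp.1⟩
  · rintro ⟨s, r⟩ _
    rfl

end KoszulLemmas

section GradedKoszul

variable {S : Type} [CommRing S] {𝒜 : ℤ → AddSubgroup S} [GradedRing 𝒜] {n : ℕ}

lemma kd_strand {x : Fin n → S} (hx : ∀ i, x i ∈ 𝒜 1) {t i : ℕ} {j : ℤ}
    {z : KCochain S n i} (hz : kStrand 𝒜 t i j z) : kStrand 𝒜 t (i + 1) j (kd x t i z) := by
  intro T
  refine sum_mem fun s _ => zsmul_mem ?_ _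
  have h := SetLike.mul_mem_graded (SetLike.pow_mem_graded t (hx s)) (hz ⟨T.1.erase s.1, by
        rw [Finset.card_erase_of_mem s.2, T.2]; rfl⟩)
  rw [smul_eq_mul]
  convert h using 2
  simp only [nsmul_eq_mul]
  push_cast
  ring

lemma kpush_strand {x : Fin n → S} (hx : ∀ i, x i ∈ 𝒜 1) {t i : ℕ} (u : ℕ) {j : ℤ}
    {z : KCochain S n i} (hz : kStrand 𝒜 t i j z) :
    kStrand 𝒜 (t + u) i j (kpush x u i z) := by
  intro T
  have hp : (∏ s ∈ T.1, x s ^ u) ∈ 𝒜 (∑ _s ∈ T.1, u • (1 : ℤ)) :=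
    SetLike.prod_mem_graded 𝒜 _ _ fun s _ => SetLike.pow_mem_graded u (hx s)
  have h := SetLike.mul_mem_graded hp (hz T)
  rw [kpush, smul_eq_mul]
  convert h using 2
  simp only [nsmul_eq_mul, Finset.sum_const, T.2]
  push_cast
  ring

/-- Taking homogeneous components commutes with the codifferential. -/
lemma proj_kd {x : Fin n → S} (hx : ∀ i, x i ∈ 𝒜 1) (t i : ℕ) (j : ℤ)
    (w : KCochain S n i) (T) :
    GradedRing.proj 𝒜 (j + (t * (i + 1) : ℕ)) (kd x t i w T) =
      kd x t i (fun U => GradedRing.proj 𝒜 (j + (t * i : ℕ)) (w U)) T := by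
  simp only [kd, map_sum, map_zsmul, smul_eq_mul]
  refine Finset.sum_congr rfl fun s _ => ?_
  congr 1
  have e : j + ((t * (i + 1) : ℕ) : ℤ) = t • (1 : ℤ) + (j + (t * i : ℕ)) := by
    simp only [nsmul_eq_mul]
    push_cast
    ring
  rw [e, GradedRing.proj_apply, GradedRing.proj_apply,
    DirectSum.coe_decompose_mul_add_of_left_mem 𝒜 (SetLike.pow_mem_graded t (hx s))]

end GradedKoszul

/-! ### Vanishing of local cohomology of subquotients -/

section Vanishing

variable {S : Type} [CommRing S] {n : ℕ}

/-- `RelVanish x 𝒜 p j A B` expresses `H^{p+1}_{S₊}(A/B)_j = 0` for ideals `B ⊆ A`, on cochains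
with values in `S`: each degree `j` cochain in `A` which is a cocycle modulo `B` becomes, after
some transition map, a coboundary modulo `B` of a degree `j` cochain in `A`.  The cohomological
degree is `p + 1`, so that only positive cohomological degrees are covered; the inclusion
`B ⊆ A` is not part of the definition. -/
def RelVanish (x : Fin n → S) (𝒜 : ℤ → AddSubgroup S) (p : ℕ) (j : ℤ) (A B : Ideal S) : Prop :=
  ∀ (t : ℕ) (z : KCochain S n (p + 1)), kStrand 𝒜 t (p + 1) j z → (∀ T, z T ∈ A) →
    (∀ T, kd x t (p + 1) z T ∈ B) →
    ∃ (u : ℕ) (w : KCochain S n p), kStrand 𝒜 (t + u) p j w ∧ (∀ T, w T ∈ A) ∧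
      ∀ T, kpush x u (p + 1) z T - kd x (t + u) p w T ∈ B

/-- `H^{p+1}` vanishes beyond the number `n` of elements, as there are no cochains. -/
lemma relVanish_of_le (x : Fin n → S) (𝒜 : ℤ → AddSubgroup S) {p : ℕ} (hp : n ≤ p) (j : ℤ)
    (A B : Ideal S) : RelVanish x 𝒜 p j A B := by
  intro t z _ _ _
  refine ⟨0, 0, fun _ => zero_mem _, fun _ => zero_mem _, fun T => absurd T.2 ?_⟩
  have := Finset.card_le_univ T.1
  simp only [Fintype.card_fin] at this
  omega

lemma relVanish_self (x : Fin n → S) (𝒜 : ℤ → AddSubgroup S) (p : ℕ) (j : ℤ)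
    (A : Ideal S) : RelVanish x 𝒜 p j A A := by
  intro t z _ hz _
  refine ⟨0, 0, fun _ => zero_mem _, fun _ => zero_mem _, fun T => ?_⟩
  exact A.sub_mem (kpush_mem A x 0 _ hz T) (kd_mem A x _ _ (fun _ => zero_mem _) T)

lemma not_lcNZ_of_relVanish {x : Fin n → S} {𝒜 : ℤ → AddSubgroup S} {I : Ideal S} {p : ℕ} {j : ℤ} (h : RelVanish x 𝒜 p j ⊤ I) :
    ¬ lcNZ x (qmPiece (I : Submodule S S) 𝒜) (p + 1) j := by
  rintro ⟨t, z, hzs, hz, hcon⟩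
  choose z' hzs' hz' using hzs
  obtain rfl : (fun U => Submodule.mkQ I (z' U)) = z := funext hz'
  rw [kd_map] at hz
  obtain ⟨u, w, -, -, hw⟩ := h t z' hzs' (fun _ => Submodule.mem_top) fun T =>
    (Submodule.Quotient.mk_eq_zero I).1 (congrFun hz T)
  refine hcon u ⟨fun U => Submodule.mkQ I (w U), ?_⟩
  rw [kd_map, kpush_map]
  funext T
  exact ((Submodule.Quotient.eq I).2 (hw T)).symm

variable {𝒜 : ℤ → AddSubgroup S} [GradedRing 𝒜] {x : Fin n → S}

/-- Half-exactness: vanishing for `A/B'` and `B'/B` gives vanishing for `A/B`. -/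
lemma RelVanish.trans (hx : ∀ i, x i ∈ 𝒜 1) {p : ℕ} {j : ℤ} {A B' B : Ideal S}
    (hBB' : B ≤ B') (hB'A : B' ≤ A) (h₁ : RelVanish x 𝒜 p j A B')
    (h₂ : RelVanish x 𝒜 p j B' B) : RelVanish x 𝒜 p j A B := by
  intro t z hzs hzA hzB
  obtain ⟨u, w, hws, hwA, hw⟩ := h₁ t z hzs hzA fun T => hBB' (hzB T)
  obtain ⟨u', w', hws', hwB', hw'⟩ := h₂ (t + u) (kpush x u (p + 1) z - kd x (t + u) p w)
    (fun T => sub_mem (kpush_strand hx u hzs T) (kd_strand hx hws T)) hw (by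
      rw [kd_sub, kd_kd, sub_zero, kd_kpush]
      exact kpush_mem B x u _ hzB)
  refine ⟨u + u', kpush x u' p w + w', ?_, ?_, ?_⟩
  · rw [← add_assoc]
    exact fun T => add_mem (kpush_strand hx u' hws T) (hws' T)
  · exact fun T => add_mem (kpush_mem A x u' _ hwA T) (hB'A (hwB' T))
  · intro T
    have h := hw' T
    rw [kpush_sub, kpush_add_exp, ← kd_kpush] at h
    rw [← add_assoc, kd_add]
    simpa only [Pi.sub_apply, Pi.add_apply, sub_sub] using h

/-- The ideal `B : g`, as the preimage of `B` under multiplication by `g`. -/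
def gcolon (B : Ideal S) (g : S) : Ideal S := Submodule.comap (LinearMap.toSpanSingleton S S g) B

lemma mem_gcolon {B : Ideal S} {g a : S} : a ∈ gcolon B g ↔ a * g ∈ B := by
  simp [gcolon]

lemma gcolon_homogeneous {B : Ideal S} (hB : B.IsHomogeneous 𝒜) {g : S} {d : ℤ}
    (hg : g ∈ 𝒜 d) : (gcolon B g).IsHomogeneous 𝒜 := by
  intro i a ha
  have h := hB (i + d) (mem_gcolon.1 ha)
  rw [DirectSum.coe_decompose_mul_add_of_right_mem 𝒜 hg] at h
  exact mem_gcolon.2 h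

/-- Local cohomology of a cyclic subquotient.  For `g` of degree `d` killed by `I` modulo `B`,
multiplication by `g` maps `(S/I)(-d)` onto `(B + (g))/B`, with kernel the shift of `(B : g)/I`;
the long exact sequence gives the vanishing. -/
lemma relVanish_cyclic (hx : ∀ i, x i ∈ 𝒜 1) {p : ℕ} {j d : ℤ} {B I : Ideal S} {g : S}
    (hB : B.IsHomogeneous 𝒜) (hg : g ∈ 𝒜 d) (hIg : ∀ a ∈ I, a * g ∈ B)
    (h₁ : RelVanish x 𝒜 p (j - d) ⊤ I)
    (h₂ : RelVanish x 𝒜 (p + 1) (j - d) (gcolon B g) I) :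
    RelVanish x 𝒜 p j (B ⊔ Ideal.span {g}) B := by
  intro t z hzs hzA hzB
  -- A homogeneous lift of `z` along multiplication by `g`, modulo `B`.
  have hlift : ∀ T, ∃ s ∈ 𝒜 (j - d + (t * (p + 1) : ℕ)), z T - s * g ∈ B := by
    intro T
    obtain ⟨b, hb, c, hc, hbc⟩ := Submodule.mem_sup.1 (hzA T)
    obtain ⟨s, rfl⟩ := Ideal.mem_span_singleton'.1 hc
    refine ⟨GradedRing.proj 𝒜 (j - d + (t * (p + 1) : ℕ)) s, SetLike.coe_mem _, ?_⟩
    have hz := DirectSum.decompose_of_mem_same 𝒜 (hzs T)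
    have e : j + ((t * (p + 1) : ℕ) : ℤ) = (j - d + (t * (p + 1) : ℕ)) + d := by ring
    rw [← hbc, e, DirectSum.decompose_add, DirectSum.add_apply, AddMemClass.coe_add,
      DirectSum.coe_decompose_mul_add_of_right_mem 𝒜 hg, hbc] at hz
    rw [← hz, GradedRing.proj_apply, add_sub_cancel_right]
    exact hB _ hb
  choose s hss hs using hlift
  have hkd : ∀ (t' i : ℕ) (y : KCochain S n i) (T), kd x t' i (fun U => y U * g) T =
      kd x t' i y T * g := fun t' i y T =>
    congrFun (kd_map (LinearMap.toSpanSingleton S S g) x t' i y) T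
  have hkp : ∀ (t' i : ℕ) (y : KCochain S n i) (T), kpush x t' i (fun U => y U * g) T =
      kpush x t' i y T * g := fun t' i y T =>
    congrFun (kpush_map (LinearMap.toSpanSingleton S S g) x t' i y) T
  have hds : ∀ T, kd x t (p + 1) s T ∈ gcolon B g := by
    intro T
    rw [mem_gcolon, ← hkd]
    have h := B.sub_mem (hzB T) (kd_mem B x t (p + 1) (z := z - fun U => s U * g) hs T)
    rw [kd_sub] at h
    simpa using h
  obtain ⟨u, w, hws, hwB, hw⟩ := h₂ t (kd x t (p + 1) s) (kd_strand hx hss) hds (by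
    rw [kd_kd]
    exact fun _ => zero_mem _)
  obtain ⟨u', v, hvs, -, hv⟩ := h₁ (t + u) (kpush x u (p + 1) s - w)
    (fun T => sub_mem (kpush_strand hx u hss T) (hws T)) (fun _ => Submodule.mem_top) (by
      rw [kd_sub, kd_kpush]
      exact hw)
  refine ⟨u + u', fun U => v U * g, ?_, ?_, ?_⟩
  · intro T
    have h := SetLike.mul_mem_graded (hvs T) hg
    rw [← add_assoc]
    convert h using 2
    ring
  · exact fun T => Ideal.mul_mem_left _ _ (Submodule.mem_sup_right (Ideal.mem_span_singleton_self g))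
  · intro T
    have e₁ := hIg _ (hv T)
    have e₂ := kpush_mem B x (u + u') (p + 1) (z := z - fun U => s U * g) hs T
    have e₃ := mem_gcolon.1 (kpush_mem (gcolon B g) x u' (p + 1) hwB T)
    rw [kpush_sub, kpush_add_exp] at e₁
    rw [kpush_sub, Pi.sub_apply, hkp] at e₂
    rw [← add_assoc, hkd]
    have := B.add_mem (B.add_mem e₁ e₂) e₃
    simp only [Pi.sub_apply] at this
    convert this using 1
    ring

/-- Vanishing for `A/B` when `A` is generated by homogeneous elements `g` each of which is killed
by `I` modulo `B`: the subquotient `A/B` has a finite filtration with cyclic quotients. -/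
lemma relVanish_of_generators [IsNoetherianRing S] (hx : ∀ i, x i ∈ 𝒜 1) {p : ℕ} {j : ℤ}
    {A B I : Ideal S} (hB : B.IsHomogeneous 𝒜) (hBA : B ≤ A)
    (hIA : I * A ≤ B) (G : Set S) (hG : Ideal.span G = A)
    (h₁ : ∀ g ∈ G, ∃ d : ℤ, g ∈ 𝒜 d ∧ RelVanish x 𝒜 p (j - d) ⊤ I)
    (h₂ : ∀ (J : Ideal S) (j' : ℤ), J.IsHomogeneous 𝒜 → I ≤ J → RelVanish x 𝒜 (p + 1) j' J I) :
    RelVanish x 𝒜 p j A B := by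
  classical
  have key : ∀ F : Finset S, (F : Set S) ⊆ G →
      (B ⊔ Ideal.span (F : Set S)).IsHomogeneous 𝒜 ∧
        RelVanish x 𝒜 p j (B ⊔ Ideal.span (F : Set S)) B := by
    intro F
    induction F using Finset.induction_on with
    | empty =>
      intro _
      simp only [Finset.coe_empty, Ideal.span_empty, sup_bot_eq]
      exact ⟨hB, relVanish_self x 𝒜 p j B⟩
    | insert g F _ ih =>
      intro hF
      rw [Finset.coe_insert] at hF ⊢
      have hgG : g ∈ G := hF (Set.mem_insert _ _)
      obtain ⟨ihB, ihV⟩ := ih fun a ha => hF (Set.mem_insert_of_mem _ ha)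
      obtain ⟨d, hgd, hgV⟩ := h₁ g hgG
      have e : B ⊔ Ideal.span (insert g (F : Set S)) =
          B ⊔ Ideal.span (F : Set S) ⊔ Ideal.span {g} := by
        rw [Ideal.span_insert, sup_assoc, sup_comm (Ideal.span {g})]
      have hIg : ∀ a ∈ I, a * g ∈ B ⊔ Ideal.span (F : Set S) := fun a ha =>
        Submodule.mem_sup_left (hIA (Ideal.mul_mem_mul ha (hG ▸ Ideal.subset_span hgG)))
      rw [e]
      refine ⟨ihB.sup (Ideal.homogeneous_span 𝒜 _ ?_), ?_⟩
      · rintro a rfl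
        exact ⟨d, hgd⟩
      · exact RelVanish.trans hx le_sup_left le_sup_left
          (relVanish_cyclic hx ihB hgd hIg hgV
            (h₂ _ _ (gcolon_homogeneous ihB hgd) fun a ha => mem_gcolon.2 (hIg a ha))) ihV
  obtain ⟨F, hF, hFA⟩ := (Submodule.fg_span_iff_fg_span_finset_subset G).1
    (IsNoetherian.noetherian (Submodule.span S G))
  have hFA' : Ideal.span (F : Set S) = A := hFA.symm.trans hG
  have h := (key F hF).2
  rwa [hFA', sup_eq_right.2 hBA] at h

/-- If `H^q(S/I) = 0` for all `q ≥ 2`, then `H^q(A/I) = 0` for all `q ≥ 2` and all homogeneous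
`A ⊇ I`.  Descending induction on `q = p + 1`, starting above `n`, with `k` bounding the distance
from `p` to `n`. -/
lemma relVanish_of_cd [IsNoetherianRing S] (hx : ∀ i, x i ∈ 𝒜 1) {I : Ideal S}
    (hI : ∀ p : ℕ, 1 ≤ p → ∀ j : ℤ, RelVanish x 𝒜 p j ⊤ I) (hIh : I.IsHomogeneous 𝒜) (k : ℕ) :
    ∀ p : ℕ, 1 ≤ p → n ≤ p + k → ∀ (j : ℤ) (A : Ideal S), A.IsHomogeneous 𝒜 → I ≤ A →
      RelVanish x 𝒜 p j A I := by
  induction k with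
  | zero => exact fun p _ hn j A _ _ => relVanish_of_le x 𝒜 hn j A I
  | succ k ih =>
    intro p hp hn j A hA hIA
    obtain ⟨G, hG⟩ := (Ideal.IsHomogeneous.iff_exists 𝒜 A).1 hA
    refine relVanish_of_generators hx hIh hIA Ideal.mul_le_left _ hG.symm ?_
      fun J j' hJ hIJ => ih (p + 1) (by omega) (by omega) j' J hJ hIJ
    rintro _ ⟨⟨g, d, hd⟩, -, rfl⟩
    exact ⟨d, hd, hI p hp _⟩

/-- Vanishing of the graded local cohomology of `S/I` gives `RelVanish` for `⊤ / I`; the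
bounding cochain is made homogeneous by taking components. -/
lemma relVanish_of_not_lcNZ (hx : ∀ i, x i ∈ 𝒜 1) {I : Ideal S} (hI : I.IsHomogeneous 𝒜)
    {p : ℕ} {j : ℤ} (h : ¬ lcNZ x (qmPiece (I : Submodule S S) 𝒜) (p + 1) j) :
    RelVanish x 𝒜 p j ⊤ I := by
  intro t z hzs _ hzI
  by_contra hcon
  refine h ⟨t, fun T => Submodule.mkQ I (z T), fun T => ⟨z T, hzs T, rfl⟩, ?_, fun u hu => hcon ?_⟩
  · rw [kd_map]
    funext T
    exact (Submodule.Quotient.mk_eq_zero I).2 (hzI T)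
  · obtain ⟨w, hw⟩ := hu
    choose w' hw' using fun U => Submodule.mkQ_surjective I (w U)
    obtain rfl : (fun U => Submodule.mkQ I (w' U)) = w := funext hw'
    rw [kd_map, kpush_map] at hw
    refine ⟨u, fun U => GradedRing.proj 𝒜 (j + ((t + u) * p : ℕ)) (w' U),
      fun U => SetLike.coe_mem _, fun _ => Submodule.mem_top, fun T => ?_⟩
    have h₀ : kpush x u (p + 1) z T - kd x (t + u) p w' T ∈ I :=
      (Submodule.Quotient.eq I).1 (congrFun hw T).symm
    have h₁ := hI (j + ((t + u) * (p + 1) : ℕ)) h₀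
    rw [← GradedRing.proj_apply, map_sub, proj_kd hx, GradedRing.proj_apply,
      DirectSum.decompose_of_mem_same 𝒜 (kpush_strand hx u hzs T)] at h₁
    exact h₁

/-- Powers of an ideal generated in degrees at most `D` are generated in degrees at most
`k * D`. -/
lemma exists_pow_generators {I : Ideal S} {D : ℕ} {G : Set S} (hG : Ideal.span G = I)
    (hd : ∀ g ∈ G, ∃ d : ℤ, d ≤ (D : ℤ) ∧ g ∈ 𝒜 d) (k : ℕ) :
    ∃ H : Set S, Ideal.span H = I ^ k ∧ ∀ g ∈ H, ∃ d : ℤ, d ≤ (k : ℤ) * D ∧ g ∈ 𝒜 d := by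
  induction k with
  | zero =>
    refine ⟨{1}, by simp, ?_⟩
    rintro g rfl
    exact ⟨0, by simp, SetLike.one_mem_graded 𝒜⟩
  | succ k ih =>
    obtain ⟨H, hH, hHd⟩ := ih
    refine ⟨{y | ∃ a ∈ H, ∃ b ∈ G, a * b = y}, ?_, ?_⟩
    · rw [pow_succ, ← hH, ← hG]
      exact (Ideal.span_mul_span' H G).symm
    · rintro _ ⟨a, ha, b, hb, rfl⟩
      obtain ⟨d, hd₁, had⟩ := hHd a ha
      obtain ⟨e, he₁, hbe⟩ := hd b hb
      refine ⟨d + e, ?_, SetLike.mul_mem_graded had hbe⟩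
      push_cast
      linarith

end Vanishing

/-- **Regularity of powers, the `a₁` estimate** (Theorem 6.1 (i)).  Let `S` be a Noetherian
standard graded ring over a Noetherian ring `S₀` and `I` a homogeneous `S`-ideal such that
`S/I` has cohomological dimension at most `1` with respect to `S₊`.  If `I` is generated by
homogeneous elements of degrees at most `D` (so that `D ≥ b₀^S(I)`), then for all `m ≥ 0`,
`a₁(S/I^{m+1}) ≤ a₁(S/I) + m·D`. -/
theorem a_one_of_power_le (S : Type) [CommRing S] [IsNoetherianRing S]
    (𝒜 : ℤ → AddSubgroup S) (hSG : IsStdGraded 𝒜)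
    (R₀ : Type) [CommRing R₀] [IsNoetherianRing R₀] [Algebra R₀ S]
    (hover : GradedOver 𝒜 R₀)
    {n : ℕ} (x : Fin n → S) (hx : GensDegOne 𝒜 x)
    (I : Ideal S)
    (hIhom : I = Ideal.span {f : S | f ∈ I ∧ ∃ d : ℤ, f ∈ 𝒜 d})
    (hcd : ∀ q : ℕ, 2 ≤ q → ∀ j : ℤ, ¬ lcNZ x (qmPiece (I : Submodule S S) 𝒜) q j)
    (D : ℕ)
    (hgen : ∃ G : Set S, Ideal.span G = I ∧ ∀ g ∈ G, ∃ d : ℤ, d ≤ (D : ℤ) ∧ g ∈ 𝒜 d)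
    (m : ℕ) :
    ∀ j : ℤ, lcNZ x (qmPiece ((I ^ (m + 1) : Ideal S) : Submodule S S) 𝒜) 1 j →
      ∃ j' : ℤ, lcNZ x (qmPiece (I : Submodule S S) 𝒜) 1 j' ∧ j ≤ j' + m * D := by
  have hx1 := hx.1
  let _ : DirectSum.Decomposition 𝒜 := hSG.internal.chooseDecomposition
  let _ : GradedRing 𝒜 := { one_mem := hSG.one_mem, mul_mem := fun _ _ _ _ => hSG.mul_mem }
  obtain ⟨G, hG, hGd⟩ := hgen
  have hpow := exists_pow_generators (𝒜 := 𝒜) hG hGd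
  have hhom : ∀ k : ℕ, (I ^ k).IsHomogeneous 𝒜 := by
    intro k
    obtain ⟨H, hH, hHd⟩ := hpow k
    rw [← hH]
    exact Ideal.homogeneous_span 𝒜 _ fun g hg => (hHd g hg).imp fun _ h => h.2
  have hIh : I.IsHomogeneous 𝒜 := by simpa using hhom 1
  have hI2 : ∀ p : ℕ, 1 ≤ p → ∀ j : ℤ, RelVanish x 𝒜 p j ⊤ I := fun p hp j =>
    relVanish_of_not_lcNZ hx1 hIh (hcd (p + 1) (by omega) j)
  intro j hj
  by_contra! hcon
  have hI1 : ∀ j', j ≤ j' + m * D → RelVanish x 𝒜 0 j' ⊤ I := fun j' hj' =>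
    relVanish_of_not_lcNZ hx1 hIh fun h => (hcon j' h).not_ge hj'
  -- `I ^ k / I ^ (k + 1)` is a quotient of a sum of copies of `S/I` shifted by degrees `≤ m * D`.
  have hquot : ∀ k : ℕ, k ≤ m → RelVanish x 𝒜 0 j (I ^ k) (I ^ (k + 1)) := by
    intro k hk
    obtain ⟨H, hH, hHd⟩ := hpow k
    refine relVanish_of_generators hx1 (hhom (k + 1)) (Ideal.pow_le_pow_right k.le_succ)
      (pow_succ' I k).ge H hH ?_ fun J j' hJ hIJ =>
        relVanish_of_cd hx1 hI2 hIh n 1 le_rfl (by omega) j' J hJ hIJ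
    intro g hg
    obtain ⟨d, hd, hgd⟩ := hHd g hg
    refine ⟨d, hgd, hI1 _ ?_⟩
    have : (k : ℤ) * D ≤ m * D := by gcongr
    linarith
  have hall : ∀ k : ℕ, k ≤ m + 1 → RelVanish x 𝒜 0 j ⊤ (I ^ k) := by
    intro k
    induction k with
    | zero =>
      intro _
      rw [pow_zero, Ideal.one_eq_top]
      exact relVanish_self x 𝒜 0 j ⊤
    | succ k ih =>
      intro hk
      exact RelVanish.trans hx1 (Ideal.pow_le_pow_right k.le_succ) le_top (ih (by omega))
        (hquot k (by omega))
  exact not_lcNZ_of_relVanish (hall (m + 1) le_rfl) hj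
end
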